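/- arXiv:1911.09921 — 2 statements merged into one kernel-verified Lean document; each statement's English description precedes it below -/
import Mathlib

section
/- Let D be an unbounded domain in ℂⁿ admitting a psh peak function φ for p = ∞. Then for any neighborhood U of ∞ there exist a neighborhood V ⊂ U of ∞ and a constant m > 0 such that for all z ∈ D ∩ V and all X ∈ ℂⁿ one has K_D(z;X) ≥ e^{mφ(z)} K_{D∩U}(z;X). -/
open Set Metric Filter Topology
open scoped Classical

noncomputable section

/-- `ℂⁿ` with the Euclidean norm. -/
abbrev Cn (n : ℕ) := EuclideanSpace ℂ (Fin n)

/-- A function `u : ℂⁿ → [-∞,∞)` (with values in `EReal`) is plurisubharmonic on `D` if it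
is upper semicontinuous on `D` and satisfies the sub-mean-value inequality on every closed
disc in a complex line contained in `D` (stated via continuous majorants on the boundary
circle, so as to handle the value `-∞`). -/
def PSHOn {n : ℕ} (u : Cn n → EReal) (D : Set (Cn n)) : Prop :=
  UpperSemicontinuousOn u D ∧
  ∀ a ∈ D, ∀ b : Cn n, ∀ r : ℝ, 0 < r →
    (∀ t : ℂ, ‖t‖ ≤ r → a + t • b ∈ D) →
    ∀ g : ℝ → ℝ, Continuous g →
      (∀ θ : ℝ, u (a + ((r : ℂ) * Complex.exp (θ * Complex.I)) • b) ≤ (g θ : EReal)) →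
      u a ≤ (((1 / (2 * Real.pi)) * ∫ θ in (0:ℝ)..(2 * Real.pi), g θ : ℝ) : EReal)

/-- `φ` is a psh peak function for the unbounded domain `D` at `p = ∞`:
`φ` is psh on `D`, `φ(z) → 0` as `|z| → ∞` in `D`, and `sup_{D∖U} φ < 0` for every
neighborhood `U` of `∞` (i.e. every set of the cobounded filter). -/
def IsPshPeakFnAtInfty {n : ℕ} (D : Set (Cn n)) (φ : Cn n → EReal) : Prop :=
  PSHOn φ D ∧ Tendsto φ (Bornology.cobounded (Cn n) ⊓ 𝓟 D) (𝓝 (0 : EReal)) ∧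
  ∀ U ∈ Bornology.cobounded (Cn n), ∃ c : ℝ, c < 0 ∧ ∀ z ∈ D \ U, φ z ≤ (c : EReal)

/-- The real exponential extended to `EReal`, with `exp(-∞) = 0` (the value at `⊤`,
irrelevant here, is also set to `0`). -/
def erexp (x : EReal) : ℝ := if x = ⊥ then 0 else if x = ⊤ then 0 else Real.exp x.toReal

/-- The Kobayashi metric of `D`:
`K_D(z;X) = inf {|α| : ∃ f : 𝔻 → D holomorphic, f 0 = z, α • f' 0 = X}`. -/
def kobayashi {n : ℕ} (D : Set (Cn n)) (z X : Cn n) : ℝ :=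
  sInf {c : ℝ | ∃ α : ℂ, c = ‖α‖ ∧ ∃ f : ℂ → Cn n,
    DifferentiableOn ℂ f (ball (0:ℂ) 1) ∧ MapsTo f (ball (0:ℂ) 1) D ∧
    f 0 = z ∧ α • deriv f 0 = X}


/-- Real-valued plurisubharmonic functions (auxiliary). -/
def RPSH {n : ℕ} (ψ : Cn n → ℝ) (D : Set (Cn n)) : Prop :=
  UpperSemicontinuousOn ψ D ∧
  ∀ a ∈ D, ∀ b : Cn n, ∀ r : ℝ, 0 < r →
    (∀ t : ℂ, ‖t‖ ≤ r → a + t • b ∈ D) →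
    ∀ g : ℝ → ℝ, Continuous g →
      (∀ θ : ℝ, ψ (a + ((r : ℂ) * Complex.exp (θ * Complex.I)) • b) ≤ g θ) →
      ψ a ≤ (1 / (2 * Real.pi)) * ∫ θ in (0:ℝ)..(2 * Real.pi), g θ

open InnerProductSpace in
lemma visc_step {n : ℕ} {ψ : Cn n → ℝ} {D : Set (Cn n)} (hD : IsOpen D) (hψ : RPSH ψ D)
    {f : ℂ → Cn n} {p ζ1 : ℂ} {w1 : Cn n} (hw1 : w1 ∈ D) {h : ℂ → ℝ} {ε N K : ℝ}
    (hε : 0 < ε) (hN : 0 ≤ N)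
    (hh : HarmonicAt h ζ1) (hf : AnalyticAt ℂ f ζ1)
    (hmax : ∀ᶠ x in 𝓝 (ζ1, w1), ψ x.2 ≤ K + h x.1 - ε * ‖x.1 - p‖^2 + N * ‖x.2 - f x.1‖^2)
    (heq : ψ w1 = K + h ζ1 - ε * ‖ζ1 - p‖^2 + N * ‖w1 - f ζ1‖^2) : False := by
  set b := deriv f ζ1 with hb
  obtain ⟨δ, hδ, hNδ⟩ : ∃ δ : ℝ, 0 < δ ∧ N * δ^2 < ε := by
    have : Tendsto (fun δ : ℝ => N * δ^2) (𝓝[>] 0) (𝓝 (N * 0^2)) := by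
      apply Tendsto.mono_left _ nhdsWithin_le_nhds
      exact (by fun_prop : Continuous fun δ : ℝ => N * δ^2).tendsto 0
    have h2 := (this.eventually_lt_const (by simpa using hε)).and self_mem_nhdsWithin
    obtain ⟨δ, h1, h2⟩ := h2.exists
    exact ⟨δ, h2, h1⟩
  -- translated conditions
  have hc : Tendsto (fun ζ : ℂ => (ζ, w1 + (ζ - ζ1) • b)) (𝓝 ζ1) (𝓝 (ζ1, w1)) := by
    have : Continuous (fun ζ : ℂ => (ζ, w1 + (ζ - ζ1) • b)) := by fun_prop
    simpa using this.tendsto ζ1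
  have e1 := hc.eventually hmax
  have e2 : ∀ᶠ ζ in 𝓝 ζ1, w1 + (ζ - ζ1) • b ∈ D :=
    (hc.snd_nhds).eventually (hD.mem_nhds hw1)
  have e3 := hh.eventually
  have e4 := hf.eventually_analyticAt
  have e5 : ∀ᶠ ζ in 𝓝 ζ1, ‖f ζ - f ζ1 - (ζ - ζ1) • b‖ ≤ δ * ‖ζ - ζ1‖ :=
    (hf.differentiableAt.hasDerivAt.isLittleO).bound hδ
  obtain ⟨s0, hs0, hs⟩ := Metric.eventually_nhds_iff_ball.1
    (e1.and (e2.and (e3.and (e4.and e5))))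
  set s := s0 / 2 with hsdef
  have hspos : 0 < s := by positivity
  have hsub : closedBall ζ1 s ⊆ ball ζ1 s0 := closedBall_subset_ball (by linarith)
  set a := w1 - f ζ1 with ha
  set H : ℂ → ℂ := fun ζ => 2 * ε * (starRingEnd ℂ) (ζ1 - p) * (ζ - ζ1)
    + 2 * N * inner ℂ a (f ζ - f ζ1 - (ζ - ζ1) • b) with hH
  set k : ℂ → ℝ := h - fun ζ => (H ζ).re with hk
  have hkh : HarmonicOnNhd k (closedBall ζ1 |s|) := by
    rw [abs_of_pos hspos]
    intro ζ hζ
    obtain ⟨-, -, q3, q4, -⟩ := hs ζ (hsub hζ)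
    refine q3.sub (AnalyticAt.harmonicAt_re ?_)
    have : AnalyticAt ℂ (fun ζ => inner ℂ a (f ζ - f ζ1 - (ζ - ζ1) • b)) ζ := by
      have h1 : AnalyticAt ℂ (fun ζ => f ζ - f ζ1 - (ζ - ζ1) • b) ζ := by fun_prop
      exact ((innerSL ℂ a).analyticAt _).comp h1
    simp only [hH]
    fun_prop
  have havg := hkh.circleAverage_eq
  have hkc : Continuous (fun θ : ℝ => k (circleMap ζ1 s θ)) := by
    apply hkh.continuousOn.comp_continuous (continuous_circleMap ζ1 s)
    intro θ
    rw [abs_of_pos hspos]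
    exact circleMap_mem_closedBall _ hspos.le _
  set c0 : ℝ := K + N * ‖a‖^2 + N * (δ * s)^2 - ε * ‖ζ1 - p‖^2 - ε * s^2 with hc0
  have key := hψ.2 w1 hw1 b s hspos (by
    intro t ht
    have := (hs (ζ1 + t) (hsub (by simpa using ht))).2.1
    simpa using this) (fun θ => c0 + k (circleMap ζ1 s θ)) (continuous_const.add hkc) (by
    intro θ
    set ζ := circleMap ζ1 s θ with hζ
    have hζd : ζ - ζ1 = (s : ℂ) * Complex.exp (θ * Complex.I) := by
      simp [hζ, circleMap]
    have hnorm : ‖ζ - ζ1‖ = s := by simp [hζ, abs_of_pos hspos]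
    obtain ⟨q1, -, -, -, q5⟩ := hs ζ (hsub (circleMap_mem_closedBall _ hspos.le _))
    rw [← hζd]
    refine q1.trans ?_
    dsimp only
    set R := f ζ - f ζ1 - (ζ - ζ1) • b with hR
    have i1 : ‖ζ - p‖^2 = ‖ζ1 - p‖^2 + 2 * ((starRingEnd ℂ) (ζ1 - p) * (ζ - ζ1)).re + s^2 := by
      rw [← hnorm, show ζ - p = (ζ1 - p) + (ζ - ζ1) by ring, Complex.sq_norm, Complex.sq_norm,
        Complex.sq_norm, Complex.normSq_apply, Complex.normSq_apply, Complex.normSq_apply]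
      simp
      ring
    have i2 : ‖w1 + (ζ - ζ1) • b - f ζ‖^2 = ‖a‖^2 - 2 * (inner ℂ a R).re + ‖R‖^2 := by
      rw [show w1 + (ζ - ζ1) • b - f ζ = a - R by rw [ha, hR]; abel]
      exact norm_sub_sq (𝕜 := ℂ) a R
    have i3 : ‖R‖^2 ≤ (δ * s)^2 := by
      rw [hnorm] at q5
      gcongr
    have i4 : (H ζ).re = 2 * ε * ((starRingEnd ℂ) (ζ1 - p) * (ζ - ζ1)).re
        + 2 * N * (inner ℂ a R).re := by
      simp only [hH, ← hR, mul_assoc]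
      norm_cast
      simp
    have i5 := mul_le_mul_of_nonneg_left i3 hN
    rw [i1, i2]
    simp only [hk, Pi.sub_apply, i4, hc0]
    linarith)
  have hint : (1 / (2 * Real.pi)) * ∫ θ in (0:ℝ)..(2 * Real.pi), (c0 + k (circleMap ζ1 s θ))
      = c0 + k ζ1 := by
    rw [intervalIntegral.integral_add (by simp) (hkc.intervalIntegrable _ _)]
    rw [← havg, Real.circleAverage]
    have := Real.pi_pos
    simp
    field_simp
  rw [hint] at key
  have : k ζ1 = h ζ1 := by simp [hk, hH]
  rw [this, heq, hc0] at key
  have : 0 < s^2 := by positivity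
  nlinarith

open InnerProductSpace in
lemma visc {n : ℕ} {ψ : Cn n → ℝ} {D : Set (Cn n)} (hD : IsOpen D) (hψ : RPSH ψ D)
    {f : ℂ → Cn n} {p : ℂ} {r0 : ℝ} (hr0 : 0 < r0) (hf : DifferentiableOn ℂ f (ball p r0))
    (hfD : MapsTo f (ball p r0) D) {h : ℂ → ℝ} (hh : HarmonicOnNhd h (ball p r0))
    {ε : ℝ} (hε : 0 < ε)
    (hle : ∀ ζ ∈ ball p r0, ψ (f ζ) ≤ h ζ - ε * ‖ζ - p‖^2)
    (heq : ψ (f p) = h p) : False := by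
  have hpD : f p ∈ D := hfD (mem_ball_self hr0)
  obtain ⟨r2, hr2, hr2D⟩ := Metric.nhds_basis_closedBall.mem_iff.1 (hD.mem_nhds hpD)
  set r1 := r0 / 2 with hr1
  have hr1pos : 0 < r1 := by positivity
  have hsub : closedBall p r1 ⊆ ball p r0 := closedBall_subset_ball (by linarith)
  set S : Set (ℂ × Cn n) := closedBall p r1 ×ˢ closedBall (f p) r2 with hS
  have hScpt : IsCompact S := (isCompact_closedBall _ _).prod (isCompact_closedBall _ _)
  have hSmem : (p, f p) ∈ S := ⟨mem_closedBall_self hr1pos.le, mem_closedBall_self hr2.le⟩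
  have hfc : ContinuousOn (fun x : ℂ × Cn n => f x.1) S :=
    (hf.continuousOn.mono hsub).comp continuous_fst.continuousOn (fun x hx => hx.1)
  have hhc : ContinuousOn (fun x : ℂ × Cn n => h x.1) S :=
    (hh.continuousOn.mono hsub).comp continuous_fst.continuousOn (fun x hx => hx.1)
  have hdc : ContinuousOn (fun x : ℂ × Cn n => ‖x.2 - f x.1‖^2) S :=
    (continuous_snd.continuousOn.sub hfc).norm.pow 2
  have husc : UpperSemicontinuousOn (fun x : ℂ × Cn n => ψ x.2) S :=
    hψ.1.comp continuous_snd.continuousOn (fun x hx => hr2D hx.2)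
  set Θ : ℕ → ℂ × Cn n → ℝ := fun N x =>
    ψ x.2 + (- h x.1 + ε / 2 * ‖x.1 - p‖^2 - N * ‖x.2 - f x.1‖^2) with hΘ
  have hΘusc : ∀ N, UpperSemicontinuousOn (Θ N) S := by
    intro N
    refine husc.add (ContinuousOn.upperSemicontinuousOn ?_)
    have h1 : Continuous (fun x : ℂ × Cn n => ε / 2 * ‖x.1 - p‖^2) := by fun_prop
    exact (hhc.neg.add h1.continuousOn).sub (continuousOn_const.mul hdc)
  have hex : ∀ N, ∃ x ∈ S, IsMaxOn (Θ N) S x := fun N =>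
    (hΘusc N).exists_isMaxOn ⟨_, hSmem⟩ hScpt
  choose x hxS hxmax using hex
  have hxnn : ∀ N, 0 ≤ Θ N (x N) := by
    intro N
    have := hxmax N hSmem
    refine le_trans ?_ this
    simp [hΘ, heq]
  obtain ⟨B, hB⟩ : ∃ B, ∀ y ∈ S, Θ 0 y ≤ B := by
    obtain ⟨B, hB⟩ := (hΘusc 0).bddAbove_of_isCompact hScpt
    exact ⟨B, fun y hy => hB ⟨y, hy, rfl⟩⟩
  have hΘ0 : ∀ N y, Θ N y = Θ 0 y - N * ‖y.2 - f y.1‖^2 := by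
    intro N y; simp only [hΘ]; push_cast; ring
  obtain ⟨y, hyS, σ, hσ, hlim⟩ := hScpt.tendsto_subseq hxS
  have hlimS : Tendsto (x ∘ σ) atTop (𝓝[S] y) :=
    tendsto_nhdsWithin_iff.2 ⟨hlim, Eventually.of_forall fun i => hxS _⟩
  -- the limit lies on the graph
  have hd : Tendsto (fun i => ‖(x (σ i)).2 - f (x (σ i)).1‖^2) atTop (𝓝 (‖y.2 - f y.1‖^2)) := by
    exact (hdc y hyS).tendsto.comp hlimS
  have hd0 : ‖y.2 - f y.1‖^2 ≤ 0 := by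
    have hz : Tendsto (fun i => B / (σ i : ℝ)) atTop (𝓝 0) :=
      (tendsto_const_div_atTop_nhds_zero_nat B).comp hσ.tendsto_atTop
    refine le_of_tendsto_of_tendsto hd hz ?_
    filter_upwards [hσ.tendsto_atTop.eventually_gt_atTop 0] with i hi
    rw [le_div_iff₀ (by exact_mod_cast hi)]
    have h1 := hxnn (σ i)
    rw [hΘ0] at h1
    have h2 := hB _ (hxS (σ i))
    linarith
  have hy2 : y.2 = f y.1 := by
    have : ‖y.2 - f y.1‖ = 0 := by
      have := sq_nonneg ‖y.2 - f y.1‖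
      exact pow_eq_zero_iff (two_ne_zero) |>.1 (le_antisymm hd0 this)
    exact sub_eq_zero.1 (norm_eq_zero.1 this)
  have hynn : 0 ≤ Θ 0 y := by
    by_contra hneg
    push Not at hneg
    have := hlimS.eventually ((hΘusc 0) y hyS 0 hneg)
    obtain ⟨i, hi⟩ := this.exists
    have h1 := hxnn (σ i)
    rw [hΘ0] at h1
    have : 0 ≤ (σ i : ℝ) * ‖(x (σ i)).2 - f (x (σ i)).1‖^2 := by positivity
    simp only [Function.comp] at hi
    linarith
  have hy1 : y.1 = p := by
    have h1 := hle y.1 (hsub hyS.1)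
    simp only [hΘ, hy2] at hynn
    simp at hynn
    have h2 : ‖y.1 - p‖^2 ≤ 0 := by
      by_contra hc
      push Not at hc
      nlinarith
    have : ‖y.1 - p‖ = 0 := pow_eq_zero_iff (two_ne_zero) |>.1 (le_antisymm h2 (sq_nonneg _))
    exact sub_eq_zero.1 (norm_eq_zero.1 this)
  have hyeq : y = (p, f p) := by
    ext1
    · exact hy1
    · rw [hy2, hy1]
  have hnear : ∀ᶠ i in atTop, x (σ i) ∈ ball p r1 ×ˢ ball (f p) r2 := by
    apply hlim.eventually
    rw [hyeq]
    exact (isOpen_ball.prod isOpen_ball).mem_nhds ⟨mem_ball_self hr1pos, mem_ball_self hr2⟩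
  obtain ⟨i, hi⟩ := hnear.exists
  set N := σ i
  have hζ : (x N).1 ∈ ball p r0 := hsub (ball_subset_closedBall hi.1)
  refine visc_step hD hψ (f := f) (p := p) (ζ1 := (x N).1) (w1 := (x N).2)
    (hr2D (ball_subset_closedBall hi.2)) (h := h) (ε := ε / 2) (N := N) (K := Θ N (x N))
    (by positivity) (by positivity) (hh _ hζ)
    (hf.analyticAt (isOpen_ball.mem_nhds hζ)) ?_ ?_
  · filter_upwards [(isOpen_ball.prod isOpen_ball).mem_nhds hi] with z hz
    have := hxmax N (show z ∈ S from ⟨ball_subset_closedBall hz.1, ball_subset_closedBall hz.2⟩)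
    simp only [mem_ofPred_eq] at this
    have h2 : Θ N z = ψ z.2 + (- h z.1 + ε / 2 * ‖z.1 - p‖^2 - N * ‖z.2 - f z.1‖^2) := rfl
    linarith
  · have h2 : Θ N (x N) = ψ (x N).2 + (- h (x N).1 + ε / 2 * ‖(x N).1 - p‖^2
      - N * ‖(x N).2 - f (x N).1‖^2) := rfl
    linarith

/-- A strict local maximum principle for holomorphic maps with a Gaussian weight. -/
lemma holo_no_max {n : ℕ} {F : ℂ → Cn n} {p : ℂ} {r0 ε : ℝ} (hr0 : 0 < r0) (hε : 0 < ε)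
    (hF : DifferentiableOn ℂ F (ball p r0)) (hFp : F p ≠ 0)
    (hmax : ∀ ζ ∈ ball p r0, ‖F ζ‖ * Real.exp (ε * ‖ζ‖^2) ≤ ‖F p‖ * Real.exp (ε * ‖p‖^2)) :
    False := by
  set s := r0 / 2 with hs
  have hspos : 0 < s := by positivity
  have hsub : closedBall p s ⊆ ball p r0 := closedBall_subset_ball (by linarith)
  set G : ℂ → Cn n := fun ζ => Complex.exp (2 * ε * ((starRingEnd ℂ) p * (ζ - p))) • F ζ with hG
  have hGd : DifferentiableOn ℂ G (closedBall p s) := by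
    have h1 := hF.mono hsub
    have h2 : Differentiable ℂ fun ζ : ℂ => Complex.exp (2 * ε * ((starRingEnd ℂ) p * (ζ - p))) := by
      fun_prop
    exact h2.differentiableOn.smul h1
  have hnorm : ∀ ζ, ‖G ζ‖ = Real.exp (2 * ε * ((starRingEnd ℂ) p * (ζ - p)).re) * ‖F ζ‖ := by
    intro ζ
    rw [hG, norm_smul, Complex.norm_exp]
    congr 2
    rw [show (2 * (ε:ℂ)) = ((2 * ε : ℝ) : ℂ) by push_cast; ring, Complex.re_ofReal_mul]
  have hb : ∀ ζ ∈ frontier (ball p s), ‖G ζ‖ ≤ ‖F p‖ * Real.exp (-(ε * s^2)) := by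
    intro ζ hζ
    rw [frontier_ball p hspos.ne'] at hζ
    have hζs : ‖ζ - p‖ = s := by simpa [dist_eq_norm] using hζ
    have h1 := hmax ζ (hsub (sphere_subset_closedBall hζ))
    have i1 : ‖ζ‖^2 = ‖p‖^2 + 2 * ((starRingEnd ℂ) p * (ζ - p)).re + s^2 := by
      rw [← hζs, Complex.sq_norm, Complex.sq_norm,
        Complex.sq_norm, Complex.normSq_apply, Complex.normSq_apply, Complex.normSq_apply]
      simp
      ring
    rw [hnorm]
    have h2 : Real.exp (2 * ε * ((starRingEnd ℂ) p * (ζ - p)).re)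
        = Real.exp (ε * ‖ζ‖^2) * Real.exp (-(ε * ‖p‖^2)) * Real.exp (-(ε * s^2)) := by
      rw [← Real.exp_add, ← Real.exp_add, i1]
      congr 1
      ring
    have h3 : ‖F p‖ = ‖F p‖ * Real.exp (ε * ‖p‖^2) * Real.exp (-(ε * ‖p‖^2)) := by
      rw [mul_assoc, ← Real.exp_add]; simp
    rw [h2, h3]
    calc Real.exp (ε * ‖ζ‖^2) * Real.exp (-(ε * ‖p‖^2)) * Real.exp (-(ε * s^2)) * ‖F ζ‖
        = (‖F ζ‖ * Real.exp (ε * ‖ζ‖^2)) * Real.exp (-(ε * ‖p‖^2)) * Real.exp (-(ε * s^2)) := by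
          ring
      _ ≤ _ := by gcongr
  have hcl : DiffContOnCl ℂ G (ball p s) := by
    apply DifferentiableOn.diffContOnCl
    rwa [closure_ball p hspos.ne']
  have := Complex.norm_le_of_forall_mem_frontier_norm_le isBounded_ball hcl hb
    (subset_closure (mem_ball_self hspos))
  rw [hnorm] at this
  simp only [sub_self, mul_zero, Complex.zero_re, Real.exp_zero, one_mul] at this
  have h4 : Real.exp (-(ε * s^2)) < 1 := Real.exp_lt_one_iff.mpr (by
    have : 0 < ε * s^2 := by positivity
    linarith)
  have h5 : 0 < ‖F p‖ := norm_pos_iff.2 hFp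
  nlinarith

open InnerProductSpace in
lemma disc_est {n : ℕ} {ψ : Cn n → ℝ} {D : Set (Cn n)} (hD : IsOpen D) (hψ : RPSH ψ D)
    {r R2 c m C : ℝ} (hr : 0 < r) (hR : 2 * r < R2) (hc : 0 < c) (hm : 0 < m) (hC : 0 < C)
    (hψ0 : ∀ w ∈ D, ψ w ≤ 0)
    (hψ1 : ∀ w ∈ D, ‖w‖ ≤ 2 * r → ψ w ≤ -c)
    (hψ2 : ∀ w ∈ D, R2 ≤ ‖w‖ → -(c / 2) ≤ ψ w)
    (hC1 : Real.exp (-(m * c)) * C < r) (hC2 : R2 + r < C * Real.exp (-(m * c / 2)))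
    {f : ℂ → Cn n} {T : ℝ} (hT : 1 < T) (hf : DifferentiableOn ℂ f (ball 0 T))
    (hfD : MapsTo f (ball 0 T) D) (hf0 : R2 < ‖f 0‖) {ζ0 : ℂ} (hζ0 : ‖ζ0‖ < 1)
    (hfζ0 : ‖f ζ0‖ ≤ r) : Real.exp (m * ψ (f 0)) ≤ ‖ζ0‖ := by
  by_contra hcon
  push Not at hcon
  have hζ00 : ζ0 ≠ 0 := by
    rintro rfl
    linarith
  have hnζ0 : 0 < ‖ζ0‖ := norm_pos_iff.2 hζ00
  have hgap : 0 < m * ψ (f 0) - Real.log ‖ζ0‖ := by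
    have := Real.log_lt_log hnζ0 hcon
    rw [Real.log_exp] at this
    linarith
  set ε := (m * ψ (f 0) - Real.log ‖ζ0‖) / 2 with hε
  have hεpos : 0 < ε := by positivity
  have hsubT : closedBall (0:ℂ) 1 ⊆ ball 0 T := closedBall_subset_ball hT
  have hfc : ContinuousOn f (closedBall 0 1) := hf.continuousOn.mono hsubT
  set d : ℂ → ℂ := fun ζ => 1 - (starRingEnd ℂ) ζ0 * ζ with hd
  have hd0 : ∀ ζ ∈ closedBall (0:ℂ) 1, d ζ ≠ 0 := by
    intro ζ hζ h0
    have h1 : (starRingEnd ℂ) ζ0 * ζ = 1 := (sub_eq_zero.1 h0).symm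
    have h2 : ‖ζ0‖ * ‖ζ‖ = 1 := by
      have := congrArg norm h1
      simpa using this
    have h3 : ‖ζ‖ ≤ 1 := by simpa using hζ
    nlinarith
  have hd1 : ∀ ζ : ℂ, ‖ζ‖ = 1 → ‖d ζ‖ = ‖ζ - ζ0‖ := by
    intro ζ hζ
    have h1 : ζ * (starRingEnd ℂ) ζ = 1 := by
      rw [Complex.mul_conj, Complex.normSq_eq_norm_sq, hζ]; simp
    have h2 : d ζ = ζ * (starRingEnd ℂ) (ζ - ζ0) := by
      simp only [hd, map_sub, mul_sub, h1]
      ring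
    rw [h2, norm_mul, hζ, one_mul, Complex.norm_conj]
  set L : ℂ → ℝ := fun ζ => Real.log ‖d ζ‖ - Real.log ‖ζ - ζ0‖ + ε * ‖ζ‖^2 with hL
  have hexpL : ∀ ζ ∈ closedBall (0:ℂ) 1, ζ ≠ ζ0 →
      Real.exp (L ζ) = ‖d ζ‖ / ‖ζ - ζ0‖ * Real.exp (ε * ‖ζ‖^2) := by
    intro ζ hζ hne
    rw [hL, Real.exp_add, Real.exp_sub, Real.exp_log (norm_pos_iff.2 (hd0 ζ hζ)),
      Real.exp_log (norm_pos_iff.2 (sub_ne_zero.2 hne))]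
  set F : ℂ → Cn n := fun ζ => d ζ • dslope f ζ0 ζ with hF
  have hζ0b : ζ0 ∈ ball (0:ℂ) T := by simpa using hζ0.trans hT
  have hFd : DifferentiableOn ℂ F (ball 0 T) := by
    have h1 : DifferentiableOn ℂ (dslope f ζ0) (ball 0 T) :=
      (Complex.differentiableOn_dslope (isOpen_ball.mem_nhds hζ0b)).2 hf
    have h2 : Differentiable ℂ d := by simp only [hd]; fun_prop
    exact h2.differentiableOn.smul h1
  set P : ℂ → ℝ := fun ζ => ‖F ζ‖ / C * Real.exp (ε * ‖ζ‖^2) with hP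
  have hPL : ∀ ζ ∈ closedBall (0:ℂ) 1, ζ ≠ ζ0 →
      P ζ = ‖f ζ - f ζ0‖ / C * Real.exp (L ζ) := by
    intro ζ hζ hne
    have : 0 < ‖ζ - ζ0‖ := norm_pos_iff.2 (sub_ne_zero.2 hne)
    rw [hexpL ζ hζ hne, hP, hF]
    simp only [norm_smul, dslope_of_ne f hne, slope, vsub_eq_sub, norm_inv]
    field_simp
  set q : ℂ → ℝ := fun ζ => m * ψ (f ζ) + L ζ with hq
  set S1 : Set ℂ := closedBall 0 1 ∩ {ζ | ‖f ζ‖ ≤ R2} with hS1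
  set S2 : Set ℂ := closedBall 0 1 ∩ {ζ | 2 * r ≤ ‖f ζ‖} with hS2
  have hS1c : IsCompact S1 := (isCompact_closedBall _ _).of_isClosed_subset
    (hfc.norm.preimage_isClosed_of_isClosed isClosed_closedBall (isClosed_Iic (a := R2)))
    inter_subset_left
  have hS2c : IsCompact S2 := (isCompact_closedBall _ _).of_isClosed_subset
    (hfc.norm.preimage_isClosed_of_isClosed isClosed_closedBall (isClosed_Ici (a := 2 * r)))
    inter_subset_left
  have hS2ne : ∀ ζ ∈ S2, ζ ≠ ζ0 := by
    rintro ζ ⟨-, h2⟩ rfl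
    simp only [mem_ofPred_eq] at h2
    linarith
  have h0S2 : (0:ℂ) ∈ S2 := ⟨by simp, by simp only [mem_ofPred_eq]; linarith⟩
  have hζ0S1 : ζ0 ∈ S1 := ⟨by simpa using hζ0.le, by simp only [mem_ofPred_eq]; linarith⟩
  have hPc : ContinuousOn P S1 := by
    have h1 : ContinuousOn F S1 := hFd.continuousOn.mono (inter_subset_left.trans hsubT)
    have h2 : Continuous (fun ζ : ℂ => Real.exp (ε * ‖ζ‖^2)) := by fun_prop
    exact (h1.norm.div_const C).mul h2.continuousOn
  have hqc : UpperSemicontinuousOn q S2 := by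
    have h1 : UpperSemicontinuousOn (fun ζ => ψ (f ζ)) S2 :=
      hψ.1.comp (hfc.mono inter_subset_left) (fun ζ hζ => hfD (hsubT hζ.1))
    have h2 : UpperSemicontinuousOn (fun ζ => m * ψ (f ζ)) S2 :=
      (by fun_prop : Continuous fun x : ℝ => m * x).comp_upperSemicontinuousOn h1
        (fun a b hab => mul_le_mul_of_nonneg_left hab hm.le)
    refine h2.add (ContinuousOn.upperSemicontinuousOn ?_)
    have h3 : ContinuousOn (fun ζ => Real.log ‖d ζ‖) S2 := by
      apply ContinuousOn.log
      · simp only [hd]; fun_prop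
      · intro ζ hζ
        exact norm_ne_zero_iff.2 (hd0 ζ hζ.1)
    have h4 : ContinuousOn (fun ζ => Real.log ‖ζ - ζ0‖) S2 := by
      apply ContinuousOn.log
      · fun_prop
      · intro ζ hζ
        exact norm_ne_zero_iff.2 (sub_ne_zero.2 (hS2ne ζ hζ))
    have h5 : Continuous (fun ζ : ℂ => ε * ‖ζ‖^2) := by fun_prop
    exact (h3.sub h4).add h5.continuousOn
  obtain ⟨p1, hp1, hmax1⟩ := hS1c.exists_isMaxOn ⟨_, hζ0S1⟩ hPc
  obtain ⟨p2, hp2, hmax2⟩ := hqc.exists_isMaxOn ⟨_, h0S2⟩ hS2c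
  have hq0 : ε < q 0 := by
    have : q 0 = 2 * ε := by
      simp only [hq, hL, hd]
      simp [hε]
      ring
    linarith
  have hq2 : ε < q p2 := lt_of_lt_of_le hq0 (hmax2 h0S2)
  have hLb : ∀ ζ : ℂ, ‖ζ‖ = 1 → L ζ = ε := by
    intro ζ hζ
    simp [hL, hd1 ζ hζ, hζ]
  have hCR : R2 + r < C := by
    have : Real.exp (-(m * c / 2)) ≤ 1 := Real.exp_le_one_iff.2 (by
      have : 0 < m * c := by positivity
      linarith)
    nlinarith
  rcases le_or_gt (Real.exp (q p2)) (P p1) with hcase | hcase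
  · -- the maximum is attained on the `P` branch
    have hPpos : 0 < P p1 := lt_of_lt_of_le (Real.exp_pos _) hcase
    have hlt2 : ‖f p1‖ < R2 := by
      rcases lt_or_eq_of_le (show ‖f p1‖ ≤ R2 from hp1.2) with h | h
      · exact h
      · exfalso
        have hp12 : p1 ∈ S2 := ⟨hp1.1, by simp only [mem_ofPred_eq, h]; linarith⟩
        have h1 := hmax2 hp12
        have h2 : P p1 < Real.exp (q p1) := by
          have hqe : Real.exp (q p1) = Real.exp (m * ψ (f p1)) * Real.exp (L p1) :=
            Real.exp_add _ _
          rw [hPL p1 hp1.1 (hS2ne _ hp12), hqe]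
          apply mul_lt_mul_of_pos_right _ (Real.exp_pos _)
          rw [div_lt_iff₀ hC]
          have h3 : ‖f p1 - f ζ0‖ ≤ R2 + r := (norm_sub_le _ _).trans (by linarith)
          have h4 : Real.exp (-(m * c / 2)) ≤ Real.exp (m * ψ (f p1)) := by
            apply Real.exp_le_exp.2
            have := hψ2 (f p1) (hfD (hsubT hp1.1)) h.ge
            nlinarith
          nlinarith
        have h5 : Real.exp (q p1) ≤ Real.exp (q p2) := Real.exp_le_exp.2 h1
        linarith
    have hlt1 : ‖p1‖ < 1 := by
      have hle : ‖p1‖ ≤ 1 := by simpa using hp1.1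
      rcases lt_or_eq_of_le hle with h | h
      · exact h
      · exfalso
        have hne : p1 ≠ ζ0 := by rintro rfl; linarith
        have h1 : P p1 ≤ 1 * Real.exp ε := by
          rw [hPL p1 hp1.1 hne, hLb p1 h]
          apply mul_le_mul_of_nonneg_right _ (Real.exp_pos _).le
          rw [div_le_one hC]
          exact (norm_sub_le _ _).trans (by linarith)
        have h2 : Real.exp ε < Real.exp (q p2) := Real.exp_lt_exp.2 hq2
        linarith
    have hnhd : ball (0:ℂ) 1 ∩ {ζ | ‖f ζ‖ < R2} ∈ 𝓝 p1 := by
      have hb : ball (0:ℂ) 1 ∈ 𝓝 p1 := isOpen_ball.mem_nhds (by simpa using hlt1)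
      refine inter_mem hb ?_
      have : ContinuousAt f p1 := hfc.continuousAt (mem_of_superset hb ball_subset_closedBall)
      exact this.norm.eventually_lt_const hlt2
    obtain ⟨s, hs, hsb⟩ := Metric.mem_nhds_iff.1 hnhd
    refine holo_no_max (F := F) (p := p1) hs hεpos
      (hFd.mono fun ζ hζ => hsubT (ball_subset_closedBall (hsb hζ).1)) ?_ ?_
    · intro h0
      simp [hP, h0] at hPpos
    · intro ζ hζ
      have := hmax1 (show ζ ∈ S1 from ⟨ball_subset_closedBall (hsb hζ).1,
        le_of_lt (show ‖f ζ‖ < R2 from (hsb hζ).2)⟩)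
      simp only [mem_ofPred_eq, hP] at this
      rw [← div_le_div_iff_of_pos_right hC, ← div_mul_eq_mul_div (‖F ζ‖),
        ← div_mul_eq_mul_div (‖F p1‖)]
      exact this
  · -- the maximum is attained on the `q` branch
    have hlt2 : 2 * r < ‖f p2‖ := by
      rcases lt_or_eq_of_le (show 2 * r ≤ ‖f p2‖ from hp2.2) with h | h
      · exact h
      · exfalso
        have hp21 : p2 ∈ S1 := ⟨hp2.1, by simp only [mem_ofPred_eq, ← h]; linarith⟩
        have h1 := hmax1 hp21
        have h2 : Real.exp (q p2) < P p2 := by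
          have hqe : Real.exp (q p2) = Real.exp (m * ψ (f p2)) * Real.exp (L p2) :=
            Real.exp_add _ _
          rw [hPL p2 hp2.1 (hS2ne _ hp2), hqe]
          apply mul_lt_mul_of_pos_right _ (Real.exp_pos _)
          rw [lt_div_iff₀ hC]
          have h3 : r ≤ ‖f p2 - f ζ0‖ := by
            have := norm_sub_norm_le (f p2) (f ζ0)
            linarith
          have h4 : Real.exp (m * ψ (f p2)) ≤ Real.exp (-(m * c)) := by
            apply Real.exp_le_exp.2
            have := hψ1 (f p2) (hfD (hsubT hp2.1)) h.ge
            nlinarith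
          nlinarith
        simp only [mem_ofPred_eq] at h1
        linarith
    have hlt1 : ‖p2‖ < 1 := by
      have hle : ‖p2‖ ≤ 1 := by simpa using hp2.1
      rcases lt_or_eq_of_le hle with h | h
      · exact h
      · exfalso
        have h1 : q p2 = m * ψ (f p2) + ε := by simp only [hq, hLb p2 h]
        have := hψ0 (f p2) (hfD (hsubT hp2.1))
        nlinarith
    have hnhd : ball (0:ℂ) 1 ∩ {ζ | 2 * r < ‖f ζ‖} ∈ 𝓝 p2 := by
      have hb : ball (0:ℂ) 1 ∈ 𝓝 p2 := isOpen_ball.mem_nhds (by simpa using hlt1)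
      refine inter_mem hb ?_
      have : ContinuousAt f p2 := hfc.continuousAt (mem_of_superset hb ball_subset_closedBall)
      exact this.norm.eventually_const_lt hlt2
    obtain ⟨s, hs, hsb⟩ := Metric.mem_nhds_iff.1 hnhd
    have hsT : ball p2 s ⊆ ball 0 T :=
      fun ζ hζ => hsubT (ball_subset_closedBall (hsb hζ).1)
    have hsS2 : ball p2 s ⊆ S2 :=
      fun ζ hζ => ⟨ball_subset_closedBall (hsb hζ).1,
        le_of_lt (show 2 * r < ‖f ζ‖ from (hsb hζ).2)⟩
    set h : ℂ → ℝ := m⁻¹ • (((fun _ => q p2 - ε * ‖p2‖^2) + (fun ζ => Real.log ‖ζ - ζ0‖)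
      - fun ζ => Real.log ‖d ζ‖) - fun ζ => (2 * ε * ((starRingEnd ℂ) p2 * (ζ - p2))).re) with hh
    have hhv : ∀ ζ, m * h ζ = q p2 - ε * ‖p2‖^2 + Real.log ‖ζ - ζ0‖ - Real.log ‖d ζ‖
        - 2 * ε * ((starRingEnd ℂ) p2 * (ζ - p2)).re := by
      intro ζ
      have : (2 * (ε:ℂ) * ((starRingEnd ℂ) p2 * (ζ - p2))).re
          = 2 * ε * ((starRingEnd ℂ) p2 * (ζ - p2)).re := by
        rw [show (2 * (ε:ℂ)) = ((2 * ε : ℝ) : ℂ) by push_cast; ring, Complex.re_ofReal_mul]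
      simp only [hh, Pi.smul_apply, Pi.sub_apply, Pi.add_apply, smul_eq_mul, this]
      field_simp
    refine visc hD hψ (f := f) (p := p2) hs (hf.mono hsT) (hfD.mono_left hsT) (h := h)
      (ε := ε / m) ?_ (by positivity) ?_ ?_
    · intro ζ hζ
      have hζ2 := hsS2 hζ
      refine HarmonicAt.const_smul (HarmonicAt.sub (HarmonicAt.sub (HarmonicAt.add
        (harmonicAt_const _) ?_) ?_) ?_)
      · exact AnalyticAt.harmonicAt_log_norm (by fun_prop) (sub_ne_zero.2 (hS2ne ζ hζ2))
      · exact AnalyticAt.harmonicAt_log_norm (by simp only [hd]; fun_prop) (hd0 ζ hζ2.1)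
      · exact AnalyticAt.harmonicAt_re (by fun_prop)
    · intro ζ hζ
      have h1 := hmax2 (hsS2 hζ)
      simp only [mem_ofPred_eq] at h1
      have h2 : q ζ = m * ψ (f ζ) + (Real.log ‖d ζ‖ - Real.log ‖ζ - ζ0‖ + ε * ‖ζ‖^2) := rfl
      have i1 : ‖ζ‖^2 = ‖p2‖^2 + 2 * ((starRingEnd ℂ) p2 * (ζ - p2)).re + ‖ζ - p2‖^2 := by
        rw [Complex.sq_norm, Complex.sq_norm,
          Complex.sq_norm, Complex.normSq_apply, Complex.normSq_apply, Complex.normSq_apply]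
        simp
        ring
      have h3 := hhv ζ
      have h4 : m * (ε / m * ‖ζ - p2‖^2) = ε * ‖ζ - p2‖^2 := by field_simp
      rw [i1] at h2
      refine le_of_mul_le_mul_left ?_ hm
      rw [mul_sub, h4, h3]
      linarith
    · have h3 := hhv p2
      have h2 : q p2 = m * ψ (f p2) + (Real.log ‖d p2‖ - Real.log ‖p2 - ζ0‖ + ε * ‖p2‖^2) := rfl
      simp only [sub_self, mul_zero, Complex.zero_re] at h3
      refine mul_left_cancel₀ hm.ne' ?_
      linarith

/-- The truncation `max φ (-c)` is a real-valued psh function. -/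
lemma rpsh_trunc {n : ℕ} {φ : Cn n → EReal} {D : Set (Cn n)} (hφ : PSHOn φ D)
    (hneg : ∀ w ∈ D, φ w < 0) (c : ℝ) :
    (∀ w ∈ D, (((max (φ w) ((-c : ℝ) : EReal)).toReal : ℝ) : EReal) = max (φ w) ((-c : ℝ) : EReal)) ∧
    RPSH (fun w => (max (φ w) ((-c : ℝ) : EReal)).toReal) D := by
  have hco : ∀ w ∈ D, (((max (φ w) ((-c : ℝ) : EReal)).toReal : ℝ) : EReal)
      = max (φ w) ((-c : ℝ) : EReal) := by
    intro w hw
    apply EReal.coe_toReal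
    · have : max (φ w) ((-c : ℝ) : EReal) < ⊤ :=
        max_lt ((hneg w hw).trans EReal.zero_lt_top) (EReal.coe_lt_top _)
      exact this.ne
    · have : ⊥ < max (φ w) ((-c : ℝ) : EReal) := lt_max_of_lt_right (EReal.bot_lt_coe _)
      exact this.ne'
  refine ⟨hco, ?_, ?_⟩
  · intro x hx y hy
    have h1 : UpperSemicontinuousOn (fun w => max (φ w) ((-c : ℝ) : EReal)) D :=
      hφ.1.sup upperSemicontinuousOn_const
    have h2 := h1 x hx (y : EReal) (by
      show max (φ x) ((-c : ℝ) : EReal) < _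
      rw [← hco x hx]
      exact_mod_cast hy)
    filter_upwards [h2, self_mem_nhdsWithin] with w hw hwD
    have h3 : max (φ w) ((-c : ℝ) : EReal) < (y : EReal) := hw
    rw [← hco w hwD] at h3
    exact_mod_cast h3
  · intro a ha b r hr hab g hg hle
    have hmem : ∀ θ : ℝ, a + ((r : ℂ) * Complex.exp (θ * Complex.I)) • b ∈ D := by
      intro θ
      apply hab
      rw [norm_mul, Complex.norm_exp_ofReal_mul_I]
      simp [abs_of_pos hr]
    have hle' : ∀ θ : ℝ, max (φ (a + ((r : ℂ) * Complex.exp (θ * Complex.I)) • b))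
        ((-c : ℝ) : EReal) ≤ (g θ : EReal) := by
      intro θ
      rw [← hco _ (hmem θ)]
      exact_mod_cast hle θ
    have h1 := hφ.2 a ha b r hr hab g hg (fun θ => (le_max_left _ _).trans (hle' θ))
    have h2 : ∀ θ, -c ≤ g θ := by
      intro θ
      exact_mod_cast (le_max_right _ _).trans (hle' θ)
    have hpi := Real.pi_pos
    have h3 : -c ≤ (1 / (2 * Real.pi)) * ∫ θ in (0:ℝ)..(2 * Real.pi), g θ := by
      have h4 : ∫ θ in (0:ℝ)..(2 * Real.pi), (-c) ≤ ∫ θ in (0:ℝ)..(2 * Real.pi), g θ :=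
        intervalIntegral.integral_mono (by positivity) (by simp) (hg.intervalIntegrable _ _) h2
      rw [intervalIntegral.integral_const, smul_eq_mul] at h4
      rw [one_div, inv_mul_eq_div, le_div_iff₀ (by positivity)]
      linarith
    have h5 : max (φ a) ((-c : ℝ) : EReal) ≤
        (((1 / (2 * Real.pi)) * ∫ θ in (0:ℝ)..(2 * Real.pi), g θ : ℝ) : EReal) :=
      max_le h1 (by exact_mod_cast h3)
    rw [← hco a ha] at h5
    exact_mod_cast h5

/-- Version of `disc_est` for maps defined on the open unit disc only. -/
lemma disc_est' {n : ℕ} {ψ : Cn n → ℝ} {D : Set (Cn n)} (hD : IsOpen D) (hψ : RPSH ψ D)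
    {r R2 c m C : ℝ} (hr : 0 < r) (hR : 2 * r < R2) (hc : 0 < c) (hm : 0 < m) (hC : 0 < C)
    (hψ0 : ∀ w ∈ D, ψ w ≤ 0)
    (hψ1 : ∀ w ∈ D, ‖w‖ ≤ 2 * r → ψ w ≤ -c)
    (hψ2 : ∀ w ∈ D, R2 ≤ ‖w‖ → -(c / 2) ≤ ψ w)
    (hC1 : Real.exp (-(m * c)) * C < r) (hC2 : R2 + r < C * Real.exp (-(m * c / 2)))
    {f : ℂ → Cn n} (hf : DifferentiableOn ℂ f (ball 0 1))
    (hfD : MapsTo f (ball 0 1) D) (hf0 : R2 < ‖f 0‖) {ζ0 : ℂ} (hζ0 : ‖ζ0‖ < 1)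
    (hfζ0 : ‖f ζ0‖ ≤ r) : Real.exp (m * ψ (f 0)) ≤ ‖ζ0‖ := by
  have key : ∀ ρ : ℝ, ‖ζ0‖ < ρ → ρ < 1 → Real.exp (m * ψ (f 0)) * ρ ≤ ‖ζ0‖ := by
    intro ρ h1 h2
    have hρ : 0 < ρ := (norm_nonneg _).trans_lt h1
    have hmaps : MapsTo (fun ζ : ℂ => (ρ : ℂ) * ζ) (ball 0 ρ⁻¹) (ball 0 1) := by
      intro ζ hζ
      simp only [mem_ball_zero_iff] at hζ ⊢
      rw [norm_mul, Complex.norm_real, Real.norm_of_nonneg hρ.le]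
      calc ρ * ‖ζ‖ < ρ * ρ⁻¹ := by gcongr
        _ = 1 := mul_inv_cancel₀ hρ.ne'
    have hdiv : (ρ : ℂ) * (ζ0 / ρ) = ζ0 := by
      have : (ρ : ℂ) ≠ 0 := by exact_mod_cast hρ.ne'
      field_simp
    have hn : ‖ζ0 / ρ‖ = ‖ζ0‖ / ρ := by
      rw [norm_div, Complex.norm_real, Real.norm_of_nonneg hρ.le]
    have := disc_est hD hψ hr hR hc hm hC hψ0 hψ1 hψ2 hC1 hC2
      (f := fun ζ => f (ρ * ζ)) (T := ρ⁻¹) ((one_lt_inv₀ hρ).2 h2)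
      (hf.comp (by fun_prop) hmaps) (hfD.comp hmaps) (by simpa using hf0)
      (ζ0 := ζ0 / ρ) (by rw [hn, div_lt_one hρ]; exact h1) (by simpa only [hdiv] using hfζ0)
    rw [hn, le_div_iff₀ hρ] at this
    simpa using this
  have hlim : Tendsto (fun ρ : ℝ => Real.exp (m * ψ (f 0)) * ρ) (𝓝[<] 1)
      (𝓝 (Real.exp (m * ψ (f 0)) * 1)) := by
    apply Tendsto.mono_left _ nhdsWithin_le_nhds
    exact (by fun_prop : Continuous fun ρ : ℝ => Real.exp (m * ψ (f 0)) * ρ).tendsto 1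
  rw [mul_one] at hlim
  refine le_of_tendsto hlim ?_
  filter_upwards [Ioo_mem_nhdsLT hζ0] with ρ hρ
  exact key ρ hρ.1 hρ.2

/-- Quantitative localization of the Kobayashi metric at `∞` for an
unbounded domain with a psh peak function at `∞`. -/
theorem kobayashi_localization_at_infty {n : ℕ} (D : Set (Cn n)) (hD : IsOpen D)
    (hDconn : IsConnected D) (hDunb : ¬ Bornology.IsBounded D)
    (φ : Cn n → EReal) (hφ : IsPshPeakFnAtInfty D φ) :
    ∀ U ∈ Bornology.cobounded (Cn n), ∃ V ∈ Bornology.cobounded (Cn n), V ⊆ U ∧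
      ∃ m : ℝ, 0 < m ∧ ∀ z ∈ D ∩ V, ∀ X : Cn n,
        kobayashi D z X ≥ erexp ((m : EReal) * φ z) * kobayashi (D ∩ U) z X := by
  intro U hU
  obtain ⟨hpsh, hlim, hpeak⟩ := hφ
  have hneg : ∀ w ∈ D, φ w < 0 := by
    intro w hw
    obtain ⟨c, hc, h⟩ := hpeak (closedBall 0 ‖w‖)ᶜ
      (Bornology.isBounded_def.1 isBounded_closedBall)
    exact (h w ⟨hw, by simp⟩).trans_lt (by exact_mod_cast hc)
  obtain ⟨r, hr, hrU⟩ : ∃ r : ℝ, 0 < r ∧ ∀ w : Cn n, r < ‖w‖ → w ∈ U := by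
    have hb : Bornology.IsBounded Uᶜ := Bornology.isBounded_def.2 (by simpa using hU)
    obtain ⟨r, hr, h⟩ := hb.subset_closedBall_lt 0 0
    refine ⟨r, hr, fun w hw => ?_⟩
    by_contra hwU
    have := h hwU
    simp at this
    linarith
  obtain ⟨c', hc', hle⟩ := hpeak (closedBall 0 (2 * r))ᶜ
    (Bornology.isBounded_def.1 isBounded_closedBall)
  obtain ⟨c, rfl⟩ : ∃ c, c' = -c := ⟨-c', by simp⟩
  have hc : 0 < c := by linarith
  obtain ⟨R, hRlim⟩ : ∃ R : ℝ, ∀ w ∈ D, R < ‖w‖ → ((-(c / 2) : ℝ) : EReal) < φ w := by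
    have h1 := hlim.eventually (lt_mem_nhds
      (show ((-(c / 2) : ℝ) : EReal) < 0 by exact_mod_cast (by linarith : -(c/2) < 0)))
    rw [eventually_inf_principal] at h1
    have hb : Bornology.IsBounded {w | w ∈ D → ((-(c / 2) : ℝ) : EReal) < φ w}ᶜ :=
      Bornology.isBounded_def.2 (by rw [compl_compl]; exact h1)
    obtain ⟨R, h⟩ := hb.subset_closedBall 0
    refine ⟨R, fun w hw hRw => ?_⟩
    by_contra hcon
    have := h (show w ∈ {w | w ∈ D → ((-(c / 2) : ℝ) : EReal) < φ w}ᶜ from fun h2 => hcon (h2 hw))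
    simp at this
    linarith
  set R2 : ℝ := max R (2 * r) + 1 with hR2
  have hR2a : R < R2 := by have := le_max_left R (2 * r); linarith
  have hR2b : 2 * r < R2 := by have := le_max_right R (2 * r); linarith
  -- constants
  have hRr : 0 < R2 + r := by linarith
  set m : ℝ := 2 / c * Real.log (4 * (R2 + r) / r) with hm
  have hlogpos : 0 < Real.log (4 * (R2 + r) / r) := Real.log_pos (by
    rw [lt_div_iff₀ hr]; linarith)
  have hmpos : 0 < m := by positivity
  have hk : Real.exp (-(m * c / 2)) = r / (4 * (R2 + r)) := by
    have : -(m * c / 2) = -Real.log (4 * (R2 + r) / r) := by rw [hm]; field_simp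
    rw [this, Real.exp_neg, Real.exp_log (by positivity), inv_div]
  have hk2 : Real.exp (-(m * c)) = (r / (4 * (R2 + r)))^2 := by
    rw [← hk, ← Real.exp_nat_mul]
    congr 1
    push_cast
    ring
  set C : ℝ := 8 * (R2 + r)^2 / r with hC
  have hCpos : 0 < C := by positivity
  have hC1 : Real.exp (-(m * c)) * C < r := by
    rw [hk2, hC]
    have : (r / (4 * (R2 + r)))^2 * (8 * (R2 + r)^2 / r) = r / 2 := by field_simp; norm_num
    rw [this]; linarith
  have hC2 : R2 + r < C * Real.exp (-(m * c / 2)) := by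
    rw [hk, hC]
    have : 8 * (R2 + r)^2 / r * (r / (4 * (R2 + r))) = 2 * (R2 + r) := by field_simp; norm_num
    rw [this]; linarith
  obtain ⟨hco, hψ⟩ := rpsh_trunc hpsh hneg c
  set ψ : Cn n → ℝ := fun w => (max (φ w) ((-c : ℝ) : EReal)).toReal with hψdef
  have hco' : ∀ w ∈ D, (ψ w : EReal) = max (φ w) ((-c : ℝ) : EReal) := hco
  have hψ0 : ∀ w ∈ D, ψ w ≤ 0 := by
    intro w hw
    have : (ψ w : EReal) ≤ 0 := by
      rw [hco' w hw]
      exact max_le (hneg w hw).le (by exact_mod_cast hc'.le)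
    exact_mod_cast this
  have hψ1 : ∀ w ∈ D, ‖w‖ ≤ 2 * r → ψ w ≤ -c := by
    intro w hw hwr
    have : (ψ w : EReal) ≤ ((-c : ℝ) : EReal) := by
      rw [hco' w hw]
      exact max_le (hle w ⟨hw, by simpa using hwr⟩) le_rfl
    exact_mod_cast this
  have hφψ : ∀ w ∈ D, R2 ≤ ‖w‖ → φ w = (ψ w : EReal) ∧ -(c / 2) ≤ ψ w := by
    intro w hw hwr
    have h1 := hRlim w hw (by linarith)
    have h2 : ((-c : ℝ) : EReal) ≤ ((-(c/2) : ℝ) : EReal) := by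
      exact_mod_cast (by linarith : -c ≤ -(c/2))
    have h3 : (ψ w : EReal) = φ w := by
      rw [hco' w hw]; exact max_eq_left (h2.trans h1.le)
    refine ⟨h3.symm, ?_⟩
    rw [← h3] at h1
    exact_mod_cast h1.le
  refine ⟨(closedBall 0 R2)ᶜ, Bornology.isBounded_def.1 isBounded_closedBall,
    ?_, m, hmpos, ?_⟩
  · intro w hw
    apply hrU
    simp at hw
    linarith
  rintro z ⟨hzD, hzV⟩ X
  have hzR : R2 < ‖z‖ := by simpa using hzV
  obtain ⟨hφz, -⟩ := hφψ z hzD hzR.le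
  have her : erexp ((m : EReal) * φ z) = Real.exp (m * ψ z) := by
    rw [hφz, ← EReal.coe_mul, erexp, if_neg (EReal.coe_ne_bot _), if_neg (EReal.coe_ne_top _),
      EReal.toReal_coe]
  rw [her]
  set ρ := Real.exp (m * ψ z) with hρ
  have hρpos : 0 < ρ := Real.exp_pos _
  have hρ1 : ρ ≤ 1 := Real.exp_le_one_iff.2 (mul_nonpos_of_nonneg_of_nonpos hmpos.le (hψ0 z hzD))
  have hbdd : ∀ E : Set (Cn n), BddBelow {c : ℝ | ∃ α : ℂ, c = ‖α‖ ∧ ∃ f : ℂ → Cn n,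
    DifferentiableOn ℂ f (ball (0:ℂ) 1) ∧ MapsTo f (ball (0:ℂ) 1) E ∧
    f 0 = z ∧ α • deriv f 0 = X} := by
    intro E
    refine ⟨0, ?_⟩
    rintro _ ⟨α, rfl, -⟩
    exact norm_nonneg α
  rw [ge_iff_le]
  rcases Set.eq_empty_or_nonempty {c : ℝ | ∃ α : ℂ, c = ‖α‖ ∧ ∃ f : ℂ → Cn n,
    DifferentiableOn ℂ f (ball (0:ℂ) 1) ∧ MapsTo f (ball (0:ℂ) 1) D ∧
    f 0 = z ∧ α • deriv f 0 = X} with hemp | hne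
  · have h2 : {c : ℝ | ∃ α : ℂ, c = ‖α‖ ∧ ∃ f : ℂ → Cn n,
      DifferentiableOn ℂ f (ball (0:ℂ) 1) ∧ MapsTo f (ball (0:ℂ) 1) (D ∩ U) ∧
      f 0 = z ∧ α • deriv f 0 = X} = ∅ := by
      rw [Set.eq_empty_iff_forall_notMem] at hemp ⊢
      rintro x ⟨α, hx, f, h1, h2, h3, h4⟩
      exact hemp x ⟨α, hx, f, h1, fun ζ hζ => (h2 hζ).1, h3, h4⟩
    rw [kobayashi, kobayashi, hemp, h2]
    simp
  · refine le_csInf hne ?_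
    rintro _ ⟨α, rfl, f, hf, hfD, hf0, hfX⟩
    have hmaps1 : MapsTo (fun ζ : ℂ => (ρ : ℂ) * ζ) (ball 0 1) (ball 0 1) := by
      intro ζ hζ
      simp only [mem_ball_zero_iff] at hζ ⊢
      rw [norm_mul, Complex.norm_real, Real.norm_of_nonneg hρpos.le]
      nlinarith [norm_nonneg ζ]
    have hρC : (ρ : ℂ) ≠ 0 := by exact_mod_cast hρpos.ne'
    have hmem : kobayashi (D ∩ U) z X ≤ ‖α / ρ‖ := by
      apply csInf_le (hbdd _)
      refine ⟨α / ρ, rfl, fun ζ => f (ρ * ζ), hf.comp (by fun_prop) hmaps1, ?_, by simpa using hf0,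
        ?_⟩
      · intro ζ hζ
        refine ⟨hfD (hmaps1 hζ), ?_⟩
        apply hrU
        by_contra hcon
        push Not at hcon
        have h1 := hmaps1 hζ
        simp only [mem_ball_zero_iff] at h1 hζ
        have := disc_est' hD hψ hr hR2b hc hmpos hCpos hψ0 hψ1
          (fun w hw hwr => (hφψ w hw hwr).2) hC1 hC2 hf hfD (by rw [hf0]; exact hzR) h1 hcon
        rw [hf0, norm_mul, Complex.norm_real, Real.norm_of_nonneg hρpos.le] at this
        nlinarith
      · have hd : HasDerivAt (fun ζ : ℂ => f (ρ * ζ)) ((ρ : ℂ) • deriv f 0) 0 := by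
          have h1 : HasDerivAt f (deriv f 0) ((ρ : ℂ) * 0) := by
            rw [mul_zero]
            exact (hf.differentiableAt (ball_mem_nhds _ one_pos)).hasDerivAt
          have h2 : HasDerivAt (fun ζ : ℂ => (ρ : ℂ) * ζ) (ρ : ℂ) 0 := by
            simpa using (hasDerivAt_id (0:ℂ)).const_mul (ρ : ℂ)
          exact h1.scomp (0:ℂ) h2
        rw [hd.deriv, smul_smul, div_mul_cancel₀ _ hρC, hfX]
    rw [norm_div, Complex.norm_real, Real.norm_of_nonneg hρpos.le, le_div_iff₀ hρpos] at hmem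
    linarith
end
end

section
/- Let D be an unbounded domain in ℂⁿ admitting a psh peak function φ for p = ∞. Then for any neighborhood U of ∞ there exist a neighborhood V ⊂ U of ∞ and a constant m > 0 such that for all z ∈ D ∩ V one has σ_{D∩U}(z) ≥ e^{mφ(z)} σ_D(z). -/
open Set Metric Filter Topology
open scoped Classical

noncomputable section

/-- The squeezing function of `D`: the supremum of all `r > 0` such that some holomorphic
embedding `f : D → 𝔹ₙ` with `f z = 0` satisfies `r𝔹ₙ ⊆ f(D)` (equal to `0` if no such
embedding exists, by the convention `sSup ∅ = 0` in `ℝ`). -/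
def squeezing {n : ℕ} (D : Set (Cn n)) (z : Cn n) : ℝ :=
  sSup {r : ℝ | 0 < r ∧ ∃ f : Cn n → Cn n, DifferentiableOn ℂ f D ∧ InjOn f D ∧
    MapsTo f D (ball (0 : Cn n) 1) ∧ f z = 0 ∧ ball (0 : Cn n) r ⊆ f '' D}

set_option linter.unusedSectionVars false

section Osgood
variable {E F : Type} [NormedAddCommGroup E] [NormedSpace ℂ E] [FiniteDimensional ℂ E]
  [NormedAddCommGroup F] [NormedSpace ℂ F] [FiniteDimensional ℂ F]

theorem osg_line_hasDerivAt {f : E → F} {x v : E} {t : ℂ} (h : DifferentiableAt ℂ f (x + t • v)) :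
    HasDerivAt (fun s : ℂ => f (x + s • v)) (fderiv ℂ f (x + t • v) v) t := by
  have h1 : HasDerivAt (fun s : ℂ => x + s • v) v t := by
    simpa using ((hasDerivAt_id t).smul_const v).const_add x
  exact h.hasFDerivAt.comp_hasDerivAt t h1

theorem osg_norm_fderiv_le {f : E → F} {Ω : Set E} (hf : DifferentiableOn ℂ f Ω)
    (hΩ : IsOpen Ω) {x : E} {r C : ℝ} (hr : 0 < r) (hC0 : 0 ≤ C) (hb : closedBall x r ⊆ Ω)
    (hC : ∀ y ∈ closedBall x r, ‖f y‖ ≤ C) : ‖fderiv ℂ f x‖ ≤ C / r := by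
  refine ContinuousLinearMap.opNorm_le_bound _ (by positivity) fun v => ?_
  by_cases hv : v = 0
  · simp [hv]
  have hv' : 0 < ‖v‖ := norm_pos_iff.2 hv
  have hmem : ∀ t ∈ closedBall (0:ℂ) (r / ‖v‖), x + t • v ∈ closedBall x r := by
    intro t ht
    simp only [mem_closedBall, dist_zero_right, dist_self_add_left, norm_smul] at ht ⊢
    rwa [le_div_iff₀ hv'] at ht
  have hd : DifferentiableOn ℂ (fun s : ℂ => f (x + s • v)) (closedBall 0 (r / ‖v‖)) := by
    intro t ht
    exact (osg_line_hasDerivAt (hf.differentiableAt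
      (hΩ.mem_nhds (hb (hmem t ht))))).differentiableAt.differentiableWithinAt
  have hd' : DiffContOnCl ℂ (fun s : ℂ => f (x + s • v)) (ball 0 (r / ‖v‖)) := by
    apply DifferentiableOn.diffContOnCl
    exact hd.mono closure_ball_subset_closedBall
  have := Complex.norm_deriv_le_of_forall_mem_sphere_norm_le (by positivity) hd'
    (fun z hz => hC _ (hmem z (sphere_subset_closedBall hz)))
  have h2 := osg_line_hasDerivAt (f := f) (x := x) (v := v) (t := 0) (hf.differentiableAt
      (hΩ.mem_nhds (hb (by simpa using hr.le))))
  rw [h2.deriv] at this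
  simp only [zero_smul, add_zero] at this
  calc _ ≤ _ := this
    _ = _ := by field_simp

theorem osg_dd_differentiableOn {f : E → F} {Ω : Set E} (hf : DifferentiableOn ℂ f Ω)
    (hΩ : IsOpen Ω) (v : E) : DifferentiableOn ℂ (fun x => fderiv ℂ f x v) Ω := by
  intro x₀ hx₀
  apply DifferentiableAt.differentiableWithinAt
  have : ProperSpace E := FiniteDimensional.proper ℂ E
  have : ProperSpace F := FiniteDimensional.proper ℂ F
  have : CompleteSpace F := FiniteDimensional.complete ℂ F
  obtain ⟨R, hR, hRb⟩ := Metric.nhds_basis_closedBall.mem_iff.1 (hΩ.mem_nhds hx₀)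
  obtain ⟨C, hC⟩ := (isCompact_closedBall x₀ R).exists_bound_of_continuousOn
    (hf.continuousOn.mono hRb)
  have hC0 : 0 ≤ C := (norm_nonneg _).trans (hC x₀ (mem_closedBall_self hR.le))
  set τ : ℝ := R / (4 * (‖v‖ + 1)) with hτ
  have hv1 : 0 < ‖v‖ + 1 := by positivity
  have hτ0 : 0 < τ := by positivity
  have hτv : τ * ‖v‖ ≤ R / 4 := by
    rw [hτ, div_mul_eq_mul_div, div_le_div_iff₀ (by positivity) (by norm_num)]
    nlinarith [norm_nonneg v]
  have hmem : ∀ x ∈ ball x₀ (R/4), ∀ t ∈ closedBall (0:ℂ) τ, x + t • v ∈ closedBall x₀ (R/2) := by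
    intro x hx t ht
    rw [mem_ball, dist_eq_norm] at hx
    rw [mem_closedBall, dist_zero_right] at ht
    rw [mem_closedBall, dist_eq_norm]
    calc ‖x + t • v - x₀‖ = ‖(x - x₀) + t • v‖ := by congr 1; abel
      _ ≤ ‖x - x₀‖ + ‖t‖ * ‖v‖ := (norm_add_le _ _).trans (by rw [norm_smul])
      _ ≤ R/4 + τ * ‖v‖ := by gcongr
      _ ≤ R/2 := by linarith
  have hsub : closedBall x₀ (R/2) ⊆ Ω := (closedBall_subset_closedBall (by linarith)).trans hRb
  have hdiff : ∀ y ∈ closedBall x₀ (R/2), DifferentiableAt ℂ f y := fun y hy =>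
    hf.differentiableAt (hΩ.mem_nhds (hsub hy))
  have hfd : ∀ y ∈ closedBall x₀ (R/2), ‖fderiv ℂ f y‖ ≤ C / (R/2) := by
    intro y hy
    have hs : closedBall y (R/2) ⊆ closedBall x₀ R := by
      apply closedBall_subset_closedBall'
      rw [mem_closedBall] at hy
      linarith
    exact osg_norm_fderiv_le hf hΩ (by positivity) hC0 (hs.trans hRb) (fun z hz => hC z (hs hz))
  let cf : ℝ → ℂ := fun θ => (2 * Real.pi * Complex.I : ℂ)⁻¹ *
    (deriv (circleMap 0 τ) θ * ((circleMap 0 τ θ) ^ 2)⁻¹)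
  have hcf : Continuous cf := by
    apply Continuous.mul continuous_const
    apply Continuous.mul
    · have : deriv (circleMap 0 τ) = fun θ => circleMap 0 τ θ * Complex.I :=
        funext fun θ => deriv_circleMap _ _ _
      rw [this]; fun_prop
    · apply Continuous.inv₀ (by fun_prop)
      intro θ
      exact pow_ne_zero _ (circleMap_ne_center hτ0.ne')
  have hrep : ∀ x ∈ ball x₀ (R/4), fderiv ℂ f x v =
      ∫ θ in (0:ℝ)..(2 * Real.pi), cf θ • f (x + circleMap 0 τ θ • v) := by
    intro x hx
    have h1 : HasDerivAt (fun s : ℂ => f (x + s • v)) (fderiv ℂ f x v) 0 := by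
      have := osg_line_hasDerivAt (f := f) (x := x) (v := v) (t := 0)
        (hdiff _ (hmem x hx 0 (by simpa using hτ0.le)))
      simpa using this
    have h2 := DiffContOnCl.deriv_eq_smul_circleIntegral (f := fun s : ℂ => f (x + s • v)) (c := 0)
      hτ0 (by
        apply DifferentiableOn.diffContOnCl
        intro t ht
        have ht' := closure_ball_subset_closedBall ht
        exact (osg_line_hasDerivAt (hdiff _ (hmem x hx t ht'))).differentiableAt.differentiableWithinAt)
    have h3 : deriv (fun s : ℂ => f (x + s • v)) 0 = (2 * Real.pi * Complex.I : ℂ)⁻¹ •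
        ∮ z in C(0, τ), (1 / (z - 0) ^ 2) • f (x + z • v) := by
      rw [h2, inv_smul_smul₀ Complex.two_pi_I_ne_zero]
    rw [← h1.deriv, h3, circleIntegral, ← intervalIntegral.integral_smul]
    apply intervalIntegral.integral_congr
    intro θ _
    simp only [cf, smul_smul, sub_zero]
    congr 1
    simp
  have hmain : HasFDerivAt (fun x => ∫ θ in (0:ℝ)..(2 * Real.pi),
      cf θ • f (x + circleMap 0 τ θ • v)) (∫ θ in (0:ℝ)..(2 * Real.pi),
      cf θ • fderiv ℂ f (x₀ + circleMap 0 τ θ • v)) x₀ := by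
    have hcm : ∀ θ, circleMap 0 τ θ ∈ closedBall (0:ℂ) τ := fun θ =>
      circleMap_mem_closedBall 0 hτ0.le θ
    have hcont : ∀ x ∈ ball x₀ (R/4), Continuous fun θ => cf θ • f (x + circleMap 0 τ θ • v) := by
      intro x hx
      apply hcf.smul
      rw [continuous_iff_continuousAt]
      intro θ
      exact ContinuousAt.comp (g := f) (f := fun θ => x + circleMap 0 τ θ • v)
        (hdiff _ (hmem x hx _ (hcm θ))).continuousAt (by fun_prop)
    rw [intervalIntegral.integral_of_le Real.two_pi_pos.le]
    simp_rw [intervalIntegral.integral_of_le Real.two_pi_pos.le]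
    apply hasFDerivAt_integral_of_dominated_of_fderiv_le (s := ball x₀ (R/4))
      (F' := fun x θ => cf θ • fderiv ℂ f (x + circleMap 0 τ θ • v))
      (bound := fun θ => ‖cf θ‖ * (C / (R/2)))
    · exact ball_mem_nhds _ (by positivity)
    · filter_upwards [ball_mem_nhds x₀ (show 0 < R/4 by positivity)] with x hx
      exact (hcont x hx).aestronglyMeasurable
    · exact ((hcont x₀ (mem_ball_self (by positivity))).integrableOn_Icc (a := 0) (b := 2*Real.pi)).mono_set Ioc_subset_Icc_self
    · apply Measurable.aestronglyMeasurable
      let : MeasurableSpace E := borel E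
      have : BorelSpace E := ⟨rfl⟩
      apply hcf.measurable.smul
      apply (measurable_fderiv ℂ f).comp
      apply Continuous.measurable
      fun_prop
    · refine Eventually.of_forall fun θ x hx => ?_
      rw [norm_smul]
      gcongr
      exact hfd _ (hmem x hx _ (hcm θ))
    · exact ((show Continuous fun θ => ‖cf θ‖ * (C / (R/2)) by fun_prop).integrableOn_Icc (a := 0) (b := 2*Real.pi)).mono_set Ioc_subset_Icc_self
    · refine Eventually.of_forall fun θ x hx => ?_
      have := (hdiff _ (hmem x hx _ (hcm θ))).hasFDerivAt
      have h3 : HasFDerivAt (fun x => f (x + circleMap 0 τ θ • v))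
          (fderiv ℂ f (x + circleMap 0 τ θ • v)) x := by
        exact (hasFDerivAt_comp_add_right (circleMap 0 τ θ • v)).2 this
      exact h3.const_smul (cf θ)
  refine (hmain.congr_of_eventuallyEq ?_).differentiableAt
  filter_upwards [ball_mem_nhds x₀ (show 0 < R/4 by positivity)] with x hx
  exact hrep x hx

end Osgood

set_option linter.unusedSectionVars false

section Osgood
variable {E F : Type} [NormedAddCommGroup E] [NormedSpace ℂ E] [FiniteDimensional ℂ E]
  [NormedAddCommGroup F] [NormedSpace ℂ F] [FiniteDimensional ℂ F]

theorem osg_strict {f : E → F} {Ω : Set E} (hf : DifferentiableOn ℂ f Ω)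
    (hΩ : IsOpen Ω) {x : E} (hx : x ∈ Ω) : HasStrictFDerivAt f (fderiv ℂ f x) x := by
  apply hasStrictFDerivAt_of_hasFDerivAt_of_continuousAt
  · filter_upwards [hΩ.mem_nhds hx] with y hy
    exact (hf.differentiableAt (hΩ.mem_nhds hy)).hasFDerivAt
  · have : ContinuousOn (fderiv ℂ f) Ω := by
      rw [continuousOn_clm_apply]
      intro v
      exact (osg_dd_differentiableOn hf hΩ v).continuousOn
    exact this.continuousAt (hΩ.mem_nhds hx)

/-- iterated derivative in a fixed direction -/
noncomputable def osgD (e : E) (J : E → ℂ) (j : ℕ) : E → ℂ :=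
  (fun (u : E → ℂ) (x : E) => fderiv ℂ u x e)^[j] J

theorem osgD_succ (e : E) (J : E → ℂ) (j : ℕ) :
    osgD e J (j + 1) = fun x => fderiv ℂ (osgD e J j) x e := by
  simp only [osgD, Function.iterate_succ', Function.comp]

theorem osgD_differentiableOn {e : E} {J : E → ℂ} {Ω : Set E} (hJ : DifferentiableOn ℂ J Ω)
    (hΩ : IsOpen Ω) (j : ℕ) : DifferentiableOn ℂ (osgD e J j) Ω := by
  induction j with
  | zero => exact hJ
  | succ j ih => rw [osgD_succ]; exact osg_dd_differentiableOn ih hΩ e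

theorem osgD_iteratedDeriv {e : E} {J : E → ℂ} {Ω : Set E} (hJ : DifferentiableOn ℂ J Ω)
    (hΩ : IsOpen Ω) (p : E) (j : ℕ) : ∀ s : ℂ, p + s • e ∈ Ω →
    iteratedDeriv j (fun s : ℂ => J (p + s • e)) s = osgD e J j (p + s • e) := by
  induction j with
  | zero => intro s _; simp [osgD]
  | succ j ih =>
    intro s hs
    rw [iteratedDeriv_succ, osgD_succ]
    have : (iteratedDeriv j fun s : ℂ => J (p + s • e)) =ᶠ[𝓝 s] fun s => osgD e J j (p + s • e) := by
      have hc : ContinuousAt (fun s : ℂ => p + s • e) s := by fun_prop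
      filter_upwards [hc.preimage_mem_nhds (hΩ.mem_nhds hs)] with t ht
      exact ih t ht
    rw [this.deriv_eq]
    exact (osg_line_hasDerivAt
      ((osgD_differentiableOn hJ hΩ j).differentiableAt (hΩ.mem_nhds hs))).deriv

theorem osg_hurwitz {J : E → ℂ} {Ω : Set E} (hJ : DifferentiableOn ℂ J Ω) (hΩ : IsOpen Ω)
    {x : E} (e₁ e₂ : E) (h0 : J x = 0) {δ : ℝ} (hδ : 0 < δ)
    (hmem : ∀ s t : ℂ, ‖s‖ ≤ δ → ‖t‖ ≤ δ → x + s • e₁ + t • e₂ ∈ Ω)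
    (hne : ∀ s : ℂ, ‖s‖ = δ → J (x + s • e₁) ≠ 0) :
    ∀ᶠ t in 𝓝 (0:ℂ), ∃ s : ℂ, ‖s‖ ≤ δ ∧ J (x + s • e₁ + t • e₂) = 0 := by
  have hJc : ∀ s t : ℂ, ‖s‖ ≤ δ → ‖t‖ ≤ δ → ContinuousAt (fun q : ℂ × ℂ => J (x + q.1 • e₁ + q.2 • e₂)) (s, t) := by
    intro s t hs ht
    exact ContinuousAt.comp (g := J) (f := fun q : ℂ × ℂ => x + q.1 • e₁ + q.2 • e₂)
      (hJ.continuousOn.continuousAt (hΩ.mem_nhds (hmem s t hs ht))) (by fun_prop)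
  have hsph : IsCompact (sphere (0:ℂ) δ) := isCompact_sphere _ _
  have hnes : (sphere (0:ℂ) δ).Nonempty := NormedSpace.sphere_nonempty.2 hδ.le
  obtain ⟨s₀, hs₀, hmin⟩ := hsph.exists_isMinOn hnes (f := fun s => ‖J (x + s • e₁)‖) (by
    intro s hs
    apply ContinuousAt.continuousWithinAt
    apply ContinuousAt.norm
    have hs' : ‖s‖ = δ := by simpa using hs
    refine ContinuousAt.comp (g := J) (f := fun s : ℂ => x + s • e₁)
      (hJ.continuousOn.continuousAt (hΩ.mem_nhds ?_)) (by fun_prop)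
    simpa using hmem s 0 hs'.le (by simpa using hδ.le))
  set m := ‖J (x + s₀ • e₁)‖ with hm
  have hm0 : 0 < m := norm_pos_iff.2 (hne s₀ (by simpa using hs₀))
  have hev1 : ∀ᶠ t in 𝓝 (0:ℂ), ∀ s ∈ sphere (0:ℂ) δ, m / 2 < ‖J (x + s • e₁ + t • e₂)‖ := by
    apply hsph.eventually_forall_of_forall_eventually
    intro s hs
    have hs' : ‖s‖ = δ := by simpa using hs
    have hc := (hJc s 0 hs'.le (by simpa using hδ.le)).norm
    have h1 : m / 2 < ‖J (x + s • e₁ + (0:ℂ) • e₂)‖ := by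
      have := hmin hs
      simp only [mem_ofPred_eq] at this
      simp only [zero_smul, add_zero]
      linarith
    have h2 := hc.eventually_const_lt h1
    have h3 : Tendsto (fun q : ℂ × ℂ => (q.2, q.1)) (𝓝 ((0:ℂ), s)) (𝓝 (s, (0:ℂ))) :=
      Continuous.tendsto' (by fun_prop) _ _ rfl
    first
      | exact h2
      | exact h3.eventually h2
  have hev2 : ∀ᶠ t in 𝓝 (0:ℂ), ‖J (x + t • e₂)‖ < m / 2 := by
    have hc : ContinuousAt (fun t : ℂ => ‖J (x + t • e₂)‖) 0 := by
      apply ContinuousAt.norm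
      refine ContinuousAt.comp (g := J) (f := fun s : ℂ => x + s • e₂)
        (hJ.continuousOn.continuousAt (hΩ.mem_nhds ?_)) (by fun_prop)
      simpa using hmem 0 0 (by simpa using hδ.le) (by simpa using hδ.le)
    apply hc.eventually_lt_const
    simp [h0, hm0]
  filter_upwards [hev1, hev2, closedBall_mem_nhds (0:ℂ) hδ] with t ht1 ht2 ht3
  by_contra! hcon
  have htδ : ‖t‖ ≤ δ := by simpa using ht3
  have hd : DifferentiableOn ℂ (fun s : ℂ => (J (x + s • e₁ + t • e₂))⁻¹) (closedBall 0 δ) := by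
    intro s hs
    have hs' : ‖s‖ ≤ δ := by simpa using hs
    apply DifferentiableAt.differentiableWithinAt
    refine DifferentiableAt.fun_inv (h := fun s : ℂ => J (x + s • e₁ + t • e₂)) ?_ (hcon s hs')
    have := (osg_line_hasDerivAt (f := J) (x := x + t • e₂) (v := e₁) (t := s)
      (hJ.differentiableAt (hΩ.mem_nhds (by
        rw [add_right_comm]; exact hmem s t hs' htδ)))).differentiableAt
    refine this.congr_of_eventuallyEq (Eventually.of_forall fun s => ?_)
    simp only [add_right_comm]
  have := Complex.norm_le_of_forall_mem_frontier_norm_le (U := ball (0:ℂ) δ) isBounded_ball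
    (f := fun s : ℂ => (J (x + s • e₁ + t • e₂))⁻¹) (C := (m/2)⁻¹)
    (DifferentiableOn.diffContOnCl (hd.mono closure_ball_subset_closedBall)) (by
      intro z hz
      rw [frontier_ball _ hδ.ne'] at hz
      rw [norm_inv]
      exact inv_anti₀ (by positivity) (ht1 z hz).le) (z := 0) (subset_closure (mem_ball_self hδ))
  simp only [zero_smul, add_zero, norm_inv] at this
  have h5 := hcon 0 (by simpa using hδ.le)
  simp only [zero_smul, add_zero] at h5
  rw [inv_le_inv₀ (norm_pos_iff.2 h5) (by positivity)] at this
  linarith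

theorem osg_key {f : E → F} {J : E → ℂ} {Ω : Set E} (hf : DifferentiableOn ℂ f Ω)
    (hJ : DifferentiableOn ℂ J Ω) (hΩ : IsOpen Ω) (hinj : InjOn f Ω)
    (hJf : ∀ x ∈ Ω, J x = 0 → fderiv ℂ f x = 0) {p e₁ e₂ : E} (hp : J p = 0)
    (he : ∀ s t : ℂ, s • e₁ + t • e₂ = 0 → t = 0)
    (hline : ∀ s : ℂ, ‖s‖ < 2 → p + s • e₁ ∈ Ω) (hJ1 : J (p + e₁) ≠ 0) : False := by
  have hpΩ : p ∈ Ω := by simpa using hline 0 (by norm_num)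
  have hex : ∃ k : ℕ, ∃ x ∈ Ω, J x = 0 ∧ osgD e₁ J k x ≠ 0 := by
    by_contra! hcon
    have hd : DifferentiableOn ℂ (fun s : ℂ => J (p + s • e₁)) (ball 0 2) := by
      intro s hs
      exact (osg_line_hasDerivAt (hJ.differentiableAt (hΩ.mem_nhds
        (hline s (by simpa using hs))))).differentiableAt.differentiableWithinAt
    have := Complex.taylorSeries_eq_on_ball' (c := (0:ℂ)) (r := 2) (z := 1) (by simp) hd
    have h0 : ∀ n, iteratedDeriv n (fun s : ℂ => J (p + s • e₁)) 0 = 0 := by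
      intro n
      rw [osgD_iteratedDeriv hJ hΩ p n 0 (by simpa using hpΩ)]
      simpa using hcon n p hpΩ hp
    simp only [h0] at this
    simp at this
    exact hJ1 this.symm
  obtain ⟨x, hxΩ, hx0, hxk⟩ := Nat.find_spec hex
  have hmin : ∀ j < Nat.find hex, ∀ y ∈ Ω, J y = 0 → osgD e₁ J j y = 0 := by
    intro j hj y hy hy0
    have := Nat.find_min hex hj
    push Not at this
    exact this y hy hy0
  set k := Nat.find hex with hk
  obtain ⟨l, hl⟩ : ∃ l, k = l + 1 := by
    apply Nat.exists_eq_succ_of_ne_zero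
    intro h
    rw [h] at hxk
    exact hxk hx0
  have hq0 := hmin l (by omega)
  -- isolated zeros along e₁
  have hiso : ∀ᶠ s in 𝓝[≠] (0:ℂ), J (x + s • e₁) ≠ 0 := by
    have hcl : ContinuousAt (fun s : ℂ => x + s • e₁) 0 := by fun_prop
    have han : AnalyticAt ℂ (fun s : ℂ => J (x + s • e₁)) 0 := by
      rw [Complex.analyticAt_iff_eventually_differentiableAt]
      filter_upwards [hcl.preimage_mem_nhds (hΩ.mem_nhds (by simpa using hxΩ))] with s hs
      exact (osg_line_hasDerivAt (hJ.differentiableAt (hΩ.mem_nhds hs))).differentiableAt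
    rcases han.eventually_eq_zero_or_eventually_ne_zero with h | h
    · exfalso
      have h1 := osgD_iteratedDeriv hJ hΩ x k (e := e₁) 0 (by simpa using hxΩ)
      have h2 : (fun s : ℂ => J (x + s • e₁)) =ᶠ[𝓝 0] fun _ => 0 := h
      rw [h2.iteratedDeriv_eq k] at h1
      simp only [zero_smul, add_zero] at h1
      apply hxk
      rw [← h1]
      simp
    · exact h
  -- strict derivative of q
  set q := osgD e₁ J l with hq
  have hqs : HasStrictFDerivAt q (fderiv ℂ q x) x :=
    osg_strict (osgD_differentiableOn hJ hΩ l) hΩ hxΩ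
  set α := fderiv ℂ q x e₁ with hα
  have hα0 : α ≠ 0 := by
    rw [hl, osgD_succ] at hxk
    exact hxk
  have hα' : 0 < ‖α‖ := norm_pos_iff.2 hα0
  set c : ℝ := ‖α‖ / (2 * (‖e₁‖ + 1)) with hc
  have he1 : 0 < ‖e₁‖ + 1 := by positivity
  have hc0 : 0 < c := by positivity
  have hce : c * ‖e₁‖ ≤ ‖α‖ / 2 := by
    rw [hc, div_mul_eq_mul_div, div_le_div_iff₀ (by positivity) (by norm_num)]
    nlinarith [norm_nonneg e₁]
  have hN := (hasStrictFDerivAt_iff_isLittleO.1 hqs).bound hc0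
  rw [nhds_prod_eq, Filter.eventually_prod_self_iff'] at hN
  obtain ⟨N, hNx, hN⟩ := hN
  set K : ℝ := (‖fderiv ℂ q x e₂‖ + c * ‖e₂‖) / (‖α‖ / 2) with hK
  have hlip : ∀ s t s' t' : ℂ, x + s • e₁ + t • e₂ ∈ N ∩ Ω → x + s' • e₁ + t' • e₂ ∈ N ∩ Ω →
      J (x + s • e₁ + t • e₂) = 0 → J (x + s' • e₁ + t' • e₂) = 0 → ‖s - s'‖ ≤ K * ‖t - t'‖ := by
    intro s t s' t' hm hm' hz hz'
    have h1 := hN _ hm.1 _ hm'.1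
    simp only at h1
    rw [hq0 _ hm.2 hz, hq0 _ hm'.2 hz'] at h1
    have h2 : x + s • e₁ + t • e₂ - (x + s' • e₁ + t' • e₂) = (s - s') • e₁ + (t - t') • e₂ := by
      module
    rw [h2, map_add, map_smul, map_smul, ← hα] at h1
    simp only [sub_zero, zero_sub, norm_neg, smul_eq_mul] at h1
    have h3 : ‖(s - s') * α‖ ≤ ‖(s - s') * α + (t - t') * fderiv ℂ q x e₂‖ +
        ‖(t - t') * fderiv ℂ q x e₂‖ := by
      have := norm_sub_le ((s - s') * α + (t - t') * fderiv ℂ q x e₂) ((t - t') * fderiv ℂ q x e₂)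
      simpa using this
    have h4 : ‖(s - s') • e₁ + (t - t') • e₂‖ ≤ ‖s - s'‖ * ‖e₁‖ + ‖t - t'‖ * ‖e₂‖ := by
      refine (norm_add_le _ _).trans ?_
      rw [norm_smul, norm_smul]
    rw [norm_mul, norm_mul] at h3
    rw [hK, div_mul_eq_mul_div, le_div_iff₀ (by positivity)]
    have h5 := mul_le_mul_of_nonneg_left h4 hc0.le
    have h6 := mul_le_mul_of_nonneg_left hce (norm_nonneg (s - s'))
    nlinarith
  have hK0 : 0 ≤ K := by positivity
  -- choose δ
  have hcont2 : ContinuousAt (fun q : ℂ × ℂ => x + q.1 • e₁ + q.2 • e₂) (0, 0) := by fun_prop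
  have hnhds : N ∩ Ω ∈ 𝓝 x := inter_mem hNx (hΩ.mem_nhds hxΩ)
  have hnhds' : N ∩ Ω ∈ 𝓝 (x + (0:ℂ) • e₁ + (0:ℂ) • e₂) := by
    simpa only [zero_smul, add_zero] using hnhds
  obtain ⟨δ₁, hδ₁, hδ₁b⟩ := Metric.mem_nhds_iff.1 (hcont2.preimage_mem_nhds hnhds')
  rw [eventually_nhdsWithin_iff, Metric.eventually_nhds_iff] at hiso
  obtain ⟨δ₂, hδ₂, hδ₂b⟩ := hiso
  set δ := min δ₁ δ₂ / 2 with hδ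
  have hδ0 : 0 < δ := by positivity
  have hδl1 : δ < δ₁ := by
    have := min_le_left δ₁ δ₂
    linarith
  have hδl2 : δ < δ₂ := by
    have := min_le_right δ₁ δ₂
    linarith
  have hmem : ∀ s t : ℂ, ‖s‖ ≤ δ → ‖t‖ ≤ δ → x + s • e₁ + t • e₂ ∈ N ∩ Ω := by
    intro s t hs ht
    have : (s, t) ∈ ball ((0:ℂ), (0:ℂ)) δ₁ := by
      rw [mem_ball, Prod.dist_eq]
      simp only [dist_zero_right]
      exact max_lt (by linarith) (by linarith)
    exact hδ₁b this
  have hH := osg_hurwitz hJ hΩ e₁ e₂ hx0 hδ0 (fun s t hs ht => (hmem s t hs ht).2) (by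
    intro s hs
    apply hδ₂b
    · simpa [hs] using hδl2
    · intro h
      simp only [mem_singleton_iff] at h
      rw [h, norm_zero] at hs
      linarith)
  obtain ⟨η, hη, hηb⟩ := Metric.eventually_nhds_iff.1 (hH.and (closedBall_mem_nhds (0:ℂ) hδ0))
  have hη' : ∀ t ∈ ball (0:ℂ) η, ∃ s : ℂ, ‖s‖ ≤ δ ∧ J (x + s • e₁ + t • e₂) = 0 :=
    fun t ht => (hηb ht).1
  have hηδ : ∀ t ∈ ball (0:ℂ) η, ‖t‖ ≤ δ := fun t ht => by simpa using (hηb ht).2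
  choose! σ hσ1 hσ2 using hη'
  have hder : ∀ t ∈ ball (0:ℂ) η, HasDerivAt (fun t => f (x + σ t • e₁ + t • e₂)) 0 t := by
    intro t₀ ht₀
    have hm0 := hmem _ _ (hσ1 t₀ ht₀) (hηδ t₀ ht₀)
    have hfd : HasFDerivAt f (0 : E →L[ℂ] F) (x + σ t₀ • e₁ + t₀ • e₂) := by
      rw [← hJf _ hm0.2 (hσ2 t₀ ht₀)]
      exact (hf.differentiableAt (hΩ.mem_nhds hm0.2)).hasFDerivAt
    have hO : (fun t => (x + σ t • e₁ + t • e₂) - (x + σ t₀ • e₁ + t₀ • e₂)) =O[𝓝 t₀]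
        fun t => t - t₀ := by
      apply Asymptotics.IsBigO.of_bound (K * ‖e₁‖ + ‖e₂‖)
      filter_upwards [isOpen_ball.mem_nhds ht₀] with t ht
      have h2 : x + σ t • e₁ + t • e₂ - (x + σ t₀ • e₁ + t₀ • e₂)
          = (σ t - σ t₀) • e₁ + (t - t₀) • e₂ := by module
      rw [h2]
      refine (norm_add_le _ _).trans ?_
      rw [norm_smul, norm_smul]
      have := hlip _ _ _ _ (hmem _ _ (hσ1 t ht) (hηδ t ht)) hm0 (hσ2 t ht) (hσ2 t₀ ht₀)
      nlinarith [norm_nonneg e₁, norm_nonneg e₂]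
    have htend : Tendsto (fun t => x + σ t • e₁ + t • e₂) (𝓝 t₀) (𝓝 (x + σ t₀ • e₁ + t₀ • e₂)) := by
      rw [tendsto_iff_norm_sub_tendsto_zero]
      have h3 : Tendsto (fun t : ℂ => t - t₀) (𝓝 t₀) (𝓝 0) :=
        Continuous.tendsto' (by fun_prop) _ _ (by simp)
      exact (hO.trans_tendsto h3).norm.trans (by simp)
    rw [hasDerivAt_iff_isLittleO]
    have h4 := (hasFDerivAt_iff_isLittleO.1 hfd).comp_tendsto htend
    have h5 := h4.trans_isBigO hO
    simpa [Function.comp_def] using h5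
  have hη2 : ((η / 2 : ℝ) : ℂ) ∈ ball (0:ℂ) η := by
    simp only [mem_ball, dist_zero_right, Complex.norm_real, Real.norm_eq_abs]
    rw [abs_of_pos (by positivity)]
    linarith
  have hconst := isOpen_ball.is_const_of_deriv_eq_zero (𝕜 := ℂ) (s := ball (0:ℂ) η)
    (convex_ball _ _).isPreconnected
    (fun t ht => (hder t ht).differentiableAt.differentiableWithinAt)
    (fun t ht => (hder t ht).deriv) (mem_ball_self hη) hη2
  have hz0 := mem_ball_self (x := (0:ℂ)) hη
  have heq := hinj (hmem _ _ (hσ1 0 hz0) (hηδ 0 hz0)).2 (hmem _ _ (hσ1 _ hη2) (hηδ _ hη2)).2 hconst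
  have h6 := he (σ ((η / 2 : ℝ) : ℂ) - σ 0) (((η / 2 : ℝ) : ℂ) - 0) (by
    have : (x + σ ((η / 2 : ℝ) : ℂ) • e₁ + ((η / 2 : ℝ) : ℂ) • e₂) - (x + σ 0 • e₁ + (0:ℂ) • e₂) = 0 :=
      sub_eq_zero.2 heq.symm
    rw [← this]
    module)
  simp only [sub_zero, Complex.ofReal_eq_zero] at h6
  linarith

end Osgood

set_option linter.unusedSectionVars false

section Osgood

theorem osg_one {u : ℂ → ℂ} {W : Set ℂ} (hW : IsOpen W) (hu : DifferentiableOn ℂ u W)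
    (hinj : InjOn u W) {z₀ : ℂ} (hz : z₀ ∈ W) : deriv u z₀ ≠ 0 := by
  have han : ∀ z ∈ W, AnalyticAt ℂ u z := fun z hzW => hu.analyticAt (hW.mem_nhds hzW)
  have hiso : ∀ᶠ s in 𝓝[≠] z₀, deriv u s ≠ 0 := by
    rcases (han z₀ hz).deriv.eventually_eq_zero_or_eventually_ne_zero with h | h
    · exfalso
      obtain ⟨r, hr, hrb⟩ := Metric.mem_nhds_iff.1 (inter_mem h (hW.mem_nhds hz))
      have hy : z₀ + ((r / 2 : ℝ) : ℂ) ∈ ball z₀ r := by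
        simp only [mem_ball, dist_self_add_left, Complex.norm_real, Real.norm_eq_abs]
        rw [abs_of_pos (by positivity)]
        linarith
      have hc := isOpen_ball.is_const_of_deriv_eq_zero (𝕜 := ℂ) (s := ball z₀ r)
        (convex_ball _ _).isPreconnected (hu.mono fun t ht => (hrb ht).2)
        (fun t ht => (hrb ht).1) (mem_ball_self hr) hy
      have := hinj hz (hrb hy).2 hc
      simp only [left_eq_add, Complex.ofReal_eq_zero] at this
      linarith
    · exact h
  rw [eventually_nhdsWithin_iff] at hiso
  obtain ⟨r, hr, hrb⟩ := Metric.mem_nhds_iff.1 (inter_mem hiso (hW.mem_nhds hz))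
  set B := ball z₀ r with hB
  have hBW : B ⊆ W := fun t ht => (hrb ht).2
  have hBi : InjOn u B := hinj.mono hBW
  have hopen : ∀ s ⊆ B, IsOpen s → IsOpen (u '' s) := by
    have hA : AnalyticOnNhd ℂ u B := fun z hzB => han z (hBW hzB)
    rcases hA.is_constant_or_isOpen (convex_ball _ _).isPreconnected with ⟨w, h⟩ | h
    · exfalso
      have hy : z₀ + ((r / 2 : ℝ) : ℂ) ∈ B := by
        simp only [hB, mem_ball, dist_self_add_left, Complex.norm_real, Real.norm_eq_abs]
        rw [abs_of_pos (by positivity)]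
        linarith
      have := hBi (mem_ball_self hr) hy ((h _ (mem_ball_self hr)).trans (h _ hy).symm)
      simp only [left_eq_add, Complex.ofReal_eq_zero] at this
      linarith
    · exact h
  let g := Function.invFunOn u B
  have hgl : ∀ z ∈ B, g (u z) = z := fun z hzB => hBi.leftInvOn_invFunOn hzB
  have hgc : ∀ z ∈ B, ContinuousAt g (u z) := by
    intro z hzB
    rw [ContinuousAt, hgl z hzB]
    intro N hN
    rw [Filter.mem_map]
    obtain ⟨N', hN'N, hN'o, hzN'⟩ := _root_.mem_nhds_iff.1 hN
    have ho := hopen (N' ∩ B) inter_subset_right (hN'o.inter isOpen_ball)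
    refine mem_of_superset (ho.mem_nhds ⟨z, ⟨hzN', hzB⟩, rfl⟩) ?_
    rintro _ ⟨y, hy, rfl⟩
    rw [mem_preimage, hgl y hy.2]
    exact hN'N hy.1
  have hBo := hopen B subset_rfl isOpen_ball
  have hz0B : z₀ ∈ B := mem_ball_self hr
  have hn : u '' B ∈ 𝓝 (u z₀) := hBo.mem_nhds ⟨z₀, hz0B, rfl⟩
  have hgd : DifferentiableOn ℂ g (u '' B) := by
    rw [← Complex.differentiableOn_compl_singleton_and_continuousAt_iff hn]
    refine ⟨?_, hgc z₀ hz0B⟩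
    rintro _ ⟨⟨z, hzB, rfl⟩, hne⟩
    have hzz : z ≠ z₀ := fun h => hne (by simp [h])
    apply DifferentiableAt.differentiableWithinAt
    refine (HasDerivAt.of_local_left_inverse (f := u) (f' := deriv u z) (hgc z hzB) ?_ ((hrb hzB).1 hzz) ?_).differentiableAt
    · rw [hgl z hzB]
      exact (han z (hBW hzB)).differentiableAt.hasDerivAt
    · filter_upwards [hBo.mem_nhds ⟨z, hzB, rfl⟩] with y hy
      obtain ⟨t, ht, rfl⟩ := hy
      rw [hgl t ht]
  intro h0
  have h1 : HasDerivAt (fun z => g (u z)) (deriv g (u z₀) * deriv u z₀) z₀ :=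
    HasDerivAt.comp z₀ (hgd.differentiableAt hn).hasDerivAt (han z₀ hz).differentiableAt.hasDerivAt
  have h2 : HasDerivAt (fun z => g (u z)) 1 z₀ := by
    refine (hasDerivAt_id z₀).congr_of_eventuallyEq ?_
    filter_upwards [isOpen_ball.mem_nhds hz0B] with z hzB
    exact hgl z hzB
  have := h1.unique h2
  rw [h0, mul_zero] at this
  exact zero_ne_one this

variable {E F : Type} [NormedAddCommGroup E] [NormedSpace ℂ E] [FiniteDimensional ℂ E]
  [NormedAddCommGroup F] [NormedSpace ℂ F] [FiniteDimensional ℂ F]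

theorem osg_det {f : E → F} {Ω : Set E} (hf : DifferentiableOn ℂ f Ω)
    (hΩ : IsOpen Ω) {n : ℕ} (hE : Module.finrank ℂ E = n) (hF : Module.finrank ℂ F = n) :
    ∃ J : E → ℂ, DifferentiableOn ℂ J Ω ∧ ∀ x, J x = 0 ↔ ∃ v ≠ 0, fderiv ℂ f x v = 0 := by
  let bE := Module.finBasisOfFinrankEq ℂ E hE
  let bF := Module.finBasisOfFinrankEq ℂ F hF
  refine ⟨fun x => (LinearMap.toMatrix bE bF (fderiv ℂ f x : E →ₗ[ℂ] F)).det, ?_, ?_⟩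
  · have hent : ∀ i j, DifferentiableOn ℂ (fun x =>
        LinearMap.toMatrix bE bF (fderiv ℂ f x : E →ₗ[ℂ] F) i j) Ω := by
      intro i j
      simp only [LinearMap.toMatrix_apply]
      have h1 := osg_dd_differentiableOn hf hΩ (bE j)
      let c : F →L[ℂ] ℂ := (bF.coord i).toContinuousLinearMap
      exact c.differentiable.comp_differentiableOn h1
    simp only [Matrix.det_apply']
    apply DifferentiableOn.fun_sum
    intro σ _
    apply DifferentiableOn.const_mul
    intro x hx
    exact (HasFDerivWithinAt.finsetProd (u := Finset.univ)
      (g := fun i x => LinearMap.toMatrix bE bF (fderiv ℂ f x : E →ₗ[ℂ] F) (σ i) i)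
      fun i _ => (hent (σ i) i x hx).hasFDerivWithinAt).differentiableWithinAt
  · intro x
    rw [← Matrix.exists_mulVec_eq_zero_iff]
    constructor
    · rintro ⟨w, hw, hw0⟩
      refine ⟨bE.equivFun.symm w, bE.equivFun.symm.map_ne_zero_iff.2 hw, ?_⟩
      have h := LinearMap.toMatrix_mulVec_repr bE bF (fderiv ℂ f x : E →ₗ[ℂ] F) (bE.equivFun.symm w)
      have h2 : (⇑(bE.repr (bE.equivFun.symm w)) : Fin n → ℂ) = w := by
        exact bE.equivFun.apply_symm_apply w
      rw [h2, hw0] at h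
      apply bF.repr.injective
      ext i
      simpa using (congrFun h i).symm
    · rintro ⟨v, hv, hv0⟩
      refine ⟨bE.repr v, ?_, ?_⟩
      · intro h
        apply hv
        apply bE.repr.injective
        ext i
        simpa using congrFun h i
      · rw [LinearMap.toMatrix_mulVec_repr]
        ext i
        simp [hv0]

theorem osg_contDiffAt {f : E → F} {Ω : Set E} (hf : DifferentiableOn ℂ f Ω)
    (hΩ : IsOpen Ω) {x : E} (hx : x ∈ Ω) : ContDiffAt ℂ 1 f x := by
  rw [contDiffAt_one_iff]
  refine ⟨fderiv ℂ f, Ω, hΩ.mem_nhds hx, ?_, fun y hy => ?_⟩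
  · rw [continuousOn_clm_apply]
    intro v
    exact (osg_dd_differentiableOn hf hΩ v).continuousOn
  · exact (hf.differentiableAt (hΩ.mem_nhds hy)).hasFDerivAt

end Osgood

set_option linter.unusedSectionVars false

section Osgood

theorem osg_finrank_ker {E : Type} [NormedAddCommGroup E] [NormedSpace ℂ E] [FiniteDimensional ℂ E]
    {n : ℕ} (hE : Module.finrank ℂ E = n + 1) (ℓ : E →L[ℂ] ℂ) (hr : ℓ.range = ⊤) :
    Module.finrank ℂ ℓ.ker = n := by
  have h := LinearMap.finrank_range_add_finrank_ker (ℓ : E →ₗ[ℂ] ℂ)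
  have h2 : Module.finrank ℂ (LinearMap.range (ℓ : E →ₗ[ℂ] ℂ)) = 1 := by
    have : LinearMap.range (ℓ : E →ₗ[ℂ] ℂ) = ⊤ := hr
    rw [this, finrank_top]
    simp
  have h3 : Module.finrank ℂ (LinearMap.ker (ℓ : E →ₗ[ℂ] ℂ)) = n := by omega
  exact h3

theorem osg_range {E : Type} [NormedAddCommGroup E] [NormedSpace ℂ E]
    (ℓ : E →L[ℂ] ℂ) {u : E} (hu : ℓ u ≠ 0) : ℓ.range = ⊤ := by
  rw [LinearMap.range_eq_top]
  intro c
  refine ⟨(c / ℓ u) • u, ?_⟩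
  simp [hu]

def OsgStmt (n : ℕ) : Prop :=
  ∀ (E F : Type) [NormedAddCommGroup E] [NormedSpace ℂ E] [FiniteDimensional ℂ E]
    [NormedAddCommGroup F] [NormedSpace ℂ F] [FiniteDimensional ℂ F],
    Module.finrank ℂ E = n → Module.finrank ℂ F = n → ∀ (f : E → F) (Ω : Set E), IsOpen Ω →
    DifferentiableOn ℂ f Ω → InjOn f Ω → ∀ x ∈ Ω, ∀ v, fderiv ℂ f x v = 0 → v = 0

variable {E F : Type} [NormedAddCommGroup E] [NormedSpace ℂ E] [FiniteDimensional ℂ E]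
  [NormedAddCommGroup F] [NormedSpace ℂ F] [FiniteDimensional ℂ F]

theorem osg_step1 {n : ℕ} (IH : OsgStmt n) (hE : Module.finrank ℂ E = n + 1)
    (hF : Module.finrank ℂ F = n + 1) {f : E → F} {Ω : Set E} (hΩ : IsOpen Ω)
    (hf : DifferentiableOn ℂ f Ω) (hinj : InjOn f Ω) {p : E} (hp : p ∈ Ω)
    (hne : fderiv ℂ f p ≠ 0) {v : E} (hv : fderiv ℂ f p v = 0) : v = 0 := by
  have : CompleteSpace E := FiniteDimensional.complete ℂ E
  have : CompleteSpace F := FiniteDimensional.complete ℂ F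
  set L := fderiv ℂ f p with hL
  obtain ⟨u, hu⟩ : ∃ u, L u ≠ 0 := by
    by_contra h
    push Not at h
    exact hne (ContinuousLinearMap.ext h)
  obtain ⟨ℓ, hℓ1, hℓ⟩ := exists_dual_vector ℂ (L u) (norm_ne_zero_iff.2 hu)
  have hℓu : ℓ (L u) ≠ 0 := by
    rw [hℓ]; simpa using hu
  set g : E → ℂ := fun x => ℓ (f x) with hg
  set g' : E →L[ℂ] ℂ := ℓ.comp L with hg'
  have hgs : HasStrictFDerivAt g g' p := ℓ.hasStrictFDerivAt.comp p (osg_strict hf hΩ hp)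
  have hr : g'.range = ⊤ := osg_range g' (u := u) hℓu
  have hrℓ : ℓ.range = ⊤ := osg_range ℓ hℓu
  have hker : g'.ker.ClosedComplemented :=
    g'.ker_closedComplemented_of_finiteDimensional_range
  have hkerℓ : ℓ.ker.ClosedComplemented :=
    ℓ.ker_closedComplemented_of_finiteDimensional_range
  obtain ⟨P, hP⟩ := hkerℓ
  set φ := hgs.implicitFunctionDataOfComplemented g g' hr hker with hφ
  set H := φ.toOpenPartialHomeomorph with hH
  have hHs : ∀ x, H x = (g x, Classical.choose hker (x - p)) := fun x => rfl
  have hHp : H p = (g p, 0) := by rw [hHs]; simp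
  have hps : p ∈ H.source := φ.pt_mem_toOpenPartialHomeomorph_source
  have hT : (g p, (0 : g'.ker)) ∈ H.target := by
    rw [← hHp]; exact H.map_source hps
  have hsym : H.symm (g p, 0) = p := by rw [← hHp]; exact H.left_inv hps
  have hcd : ContDiffAt ℂ 1 H.symm (g p, 0) := by
    have hd := φ.hasStrictFDerivAt.hasFDerivAt
    refine H.contDiffAt_symm hT (by rw [hsym]; exact hd) ?_
    rw [hsym]
    have h1 : ContDiffAt ℂ 1 (fun x => (g x, Classical.choose hker (x - p))) p := by
      apply ContDiffAt.prodMk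
      · exact ℓ.contDiff.contDiffAt.comp p (osg_contDiffAt hf hΩ hp)
      · exact (Classical.choose hker).contDiff.contDiffAt.comp p (contDiffAt_id.sub contDiffAt_const)
    exact h1
  set γ : g'.ker → E := fun y => H.symm (g p, y) with hγ
  have hγ0 : γ 0 = p := hsym
  have hγd : HasStrictFDerivAt γ g'.ker.subtypeL 0 :=
    hgs.to_implicitFunctionOfComplemented hr hker
  have hcont : Tendsto (fun y : g'.ker => (g p, y)) (𝓝 0) (𝓝 (g p, 0)) :=
    (Continuous.prodMk continuous_const continuous_id).tendsto _
  have e1 : ∀ᶠ y in 𝓝 (0 : g'.ker), (g p, y) ∈ H.target :=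
    hcont.eventually (H.open_target.mem_nhds hT)
  have e2 : ∀ᶠ y in 𝓝 (0 : g'.ker), γ y ∈ Ω := by
    have : Tendsto γ (𝓝 0) (𝓝 p) := by
      have := hγd.hasFDerivAt.continuousAt
      rwa [ContinuousAt, hγ0] at this
    exact this.eventually (hΩ.mem_nhds hp)
  have e3 : ∀ᶠ y in 𝓝 (0 : g'.ker), DifferentiableAt ℂ γ y := by
    filter_upwards [hcont.eventually (hcd.eventually (by simp))] with y hy
    exact DifferentiableAt.comp y (hy.differentiableAt (by simp))
      ((differentiableAt_const _).prodMk differentiableAt_id)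
  obtain ⟨ε, hε, hεb⟩ := Metric.mem_nhds_iff.1 (e1.and (e2.and e3))
  set k : g'.ker → ℓ.ker := fun y => P (f (γ y) - f p) with hk
  have hval : ∀ y ∈ ball (0 : g'.ker) ε, (k y : F) = f (γ y) - f p := by
    intro y hy
    have hm : f (γ y) - f p ∈ ℓ.ker := by
      rw [LinearMap.mem_ker]
      have h1 : (H (γ y)).1 = g p := by
        rw [hγ]; simp only; rw [H.right_inv (hεb hy).1]
      rw [hHs] at h1
      have h2 : ℓ (f (γ y)) = ℓ (f p) := h1
      simp [h2]
    have := hP ⟨_, hm⟩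
    exact congrArg Subtype.val this
  have hkinj : InjOn k (ball 0 ε) := by
    intro y₁ h₁ y₂ h₂ h
    have h3 : f (γ y₁) = f (γ y₂) := by
      have := congrArg Subtype.val h
      rw [hval y₁ h₁, hval y₂ h₂] at this
      exact sub_left_injective this
    have h4 := hinj (hεb h₁).2.1 (hεb h₂).2.1 h3
    have h5 := congrArg H h4
    simp only [hγ] at h5
    rw [H.right_inv (hεb h₁).1, H.right_inv (hεb h₂).1] at h5
    exact (Prod.mk.inj h5).2
  have hkd : DifferentiableOn ℂ k (ball 0 ε) := by
    intro y hy
    apply DifferentiableAt.differentiableWithinAt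
    refine P.differentiableAt.comp y (DifferentiableAt.sub_const ?_ _)
    exact DifferentiableAt.comp y (hf.differentiableAt (hΩ.mem_nhds (hεb hy).2.1)) (hεb hy).2.2
  have hk0 : HasFDerivAt k (P.comp (L.comp g'.ker.subtypeL)) 0 := by
    refine P.hasFDerivAt.comp 0 (HasFDerivAt.sub_const _ ?_)
    refine HasFDerivAt.comp 0 ?_ hγd.hasFDerivAt
    rw [hγ0]
    exact (osg_strict hf hΩ hp).hasFDerivAt
  have hvk : v ∈ g'.ker := by
    rw [LinearMap.mem_ker]
    change ℓ (L v) = 0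
    rw [hv, map_zero]
  have := IH g'.ker ℓ.ker (osg_finrank_ker hE g' hr) (osg_finrank_ker hF ℓ hrℓ) k (ball 0 ε)
    isOpen_ball hkd hkinj 0 (mem_ball_self hε) ⟨v, hvk⟩ (by
      rw [hk0.fderiv]
      simp [hv])
  exact congrArg Subtype.val this

theorem osg_all : ∀ n, OsgStmt n := by
  intro n
  induction n with
  | zero =>
    intro E F _ _ _ _ _ _ hE hF f Ω hΩ hf hinj x hx v hv
    have := Module.finrank_zero_iff.1 hE
    exact Subsingleton.elim _ _
  | succ n IH =>
    intro E F _ _ _ _ _ _ hE hF f Ω hΩ hf hinj p hp v hv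
    by_cases hne : fderiv ℂ f p = 0
    swap
    · exact osg_step1 IH hE hF hΩ hf hinj hp hne hv
    exfalso
    have : Nontrivial E := Module.nontrivial_of_finrank_pos (R := ℂ) (by omega)
    obtain ⟨J, hJ, hJ0⟩ := osg_det hf hΩ hE hF
    have hJf : ∀ x ∈ Ω, J x = 0 → fderiv ℂ f x = 0 := by
      intro x hx hx0
      by_contra hne'
      obtain ⟨w, hw, hw0⟩ := (hJ0 x).1 hx0
      exact hw (osg_step1 IH hE hF hΩ hf hinj hx hne' hw0)
    obtain ⟨ε, hε, hεb⟩ := Metric.mem_nhds_iff.1 (hΩ.mem_nhds hp)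
    obtain ⟨y, hy, hyJ⟩ : ∃ y ∈ ball p (ε / 2), J y ≠ 0 := by
      by_contra h
      push Not at h
      have hsub : ball p (ε / 2) ⊆ Ω := (ball_subset_ball (by linarith)).trans hεb
      obtain ⟨w, hw⟩ := exists_ne (0 : E)
      have hw' : 0 < ‖w‖ := norm_pos_iff.2 hw
      have hm : p + ((ε / 4 / ‖w‖ : ℝ) : ℂ) • w ∈ ball p (ε / 2) := by
        rw [mem_ball, dist_self_add_left, norm_smul, Complex.norm_real, Real.norm_eq_abs,
          abs_of_pos (by positivity)]
        field_simp
        norm_num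
      have hc := isOpen_ball.is_const_of_fderiv_eq_zero (𝕜 := ℂ)
        (convex_ball p (ε / 2)).isPreconnected (hf.mono hsub)
        (fun t ht => hJf t (hsub ht) (h t ht)) (mem_ball_self (by positivity)) hm
      have h1 := hinj hp (hsub hm) hc
      have h2 : ((ε / 4 / ‖w‖ : ℝ) : ℂ) • w = 0 := by simpa using h1
      rcases smul_eq_zero.1 h2 with h3 | h3
      · have h4 : ε / 4 / ‖w‖ = 0 := by exact_mod_cast h3
        have : 0 < ε / 4 / ‖w‖ := by positivity
        linarith
      · exact hw h3
    have hpJ : J p = 0 := by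
      obtain ⟨w, hw⟩ := exists_ne (0 : E)
      exact (hJ0 p).2 ⟨w, hw, by simp [hne]⟩
    set e₁ := y - p with he₁
    have he₁n : ‖e₁‖ < ε / 2 := by
      rw [mem_ball, dist_eq_norm] at hy
      exact hy
    have he₁0 : e₁ ≠ 0 := by
      intro h
      have : y = p := sub_eq_zero.1 h
      exact hyJ (this ▸ hpJ)
    have hline : ∀ s : ℂ, ‖s‖ < 2 → p + s • e₁ ∈ Ω := by
      intro s hs
      apply hεb
      rw [mem_ball, dist_self_add_left, norm_smul]
      have : ‖s‖ * ‖e₁‖ ≤ 2 * ‖e₁‖ := by gcongr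
      linarith
    by_cases hex : ∃ e₂, e₂ ∉ Submodule.span ℂ {e₁}
    · obtain ⟨e₂, he₂⟩ := hex
      refine osg_key hf hJ hΩ hinj hJf hpJ (e₁ := e₁) (e₂ := e₂) ?_ hline (by simpa [he₁] using hyJ)
      intro s t hst
      by_contra ht
      apply he₂
      rw [Submodule.mem_span_singleton]
      refine ⟨-(t⁻¹ * s), ?_⟩
      have : t • e₂ = -(s • e₁) := by
        rw [eq_neg_iff_add_eq_zero, add_comm]; exact hst
      have h2 : e₂ = t⁻¹ • (t • e₂) := by rw [smul_smul, inv_mul_cancel₀ ht, one_smul]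
      rw [h2, this, smul_neg, smul_smul, neg_smul]
    · push Not at hex
      have h1 : Module.finrank ℂ E = 1 := by
        apply finrank_eq_one e₁ he₁0
        intro w
        exact Submodule.mem_span_singleton.1 (hex w)
      have h2 : Module.finrank ℂ F = Module.finrank ℂ ℂ := by
        rw [Module.finrank_self]; omega
      let c : F ≃L[ℂ] ℂ := ContinuousLinearEquiv.ofFinrankEq h2
      have hcl : ∀ s : ℂ, HasDerivAt (fun s : ℂ => p + s • e₁) e₁ s := by
        intro s
        simpa using ((hasDerivAt_id s).smul_const e₁).const_add p
      have hud : ∀ s ∈ ball (0 : ℂ) 2, HasDerivAt (fun s : ℂ => c (f (p + s • e₁)))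
          (c (fderiv ℂ f (p + s • e₁) e₁)) s := by
        intro s hs
        rw [mem_ball_zero_iff] at hs
        have h3 := (hf.differentiableAt (hΩ.mem_nhds (hline s hs))).hasFDerivAt
        exact c.toContinuousLinearMap.hasFDerivAt.comp_hasDerivAt s (h3.comp_hasDerivAt s (hcl s))
      have := osg_one (u := fun s => c (f (p + s • e₁))) (W := ball 0 2) isOpen_ball
        (fun s hs => (hud s hs).differentiableAt.differentiableWithinAt) (by
          intro s hs t ht hst
          rw [mem_ball_zero_iff] at hs ht
          have h4 := hinj (hline s hs) (hline t ht) (c.injective hst)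
          have h5 : s • e₁ = t • e₁ := add_left_cancel h4
          exact smul_left_injective ℂ he₁0 h5) (z₀ := 0) (mem_ball_self (by norm_num))
      apply this
      rw [(hud 0 (mem_ball_self (by norm_num))).deriv]
      simp [hne]

/-- An injective holomorphic map between spaces of equal dimension has a holomorphic inverse. -/
theorem osg_inverse (hEF : Module.finrank ℂ E = Module.finrank ℂ F) {f : E → F} {Ω : Set E}
    (hΩ : IsOpen Ω) (hf : DifferentiableOn ℂ f Ω) (hinj : InjOn f Ω) :
    IsOpen (f '' Ω) ∧ ∃ h : F → E, DifferentiableOn ℂ h (f '' Ω) ∧ (∀ x ∈ Ω, h (f x) = x) := by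
  have : CompleteSpace E := FiniteDimensional.complete ℂ E
  have : CompleteSpace F := FiniteDimensional.complete ℂ F
  have hinv : ∀ x ∈ Ω, ∃ A : E ≃L[ℂ] F, HasStrictFDerivAt f (A : E →L[ℂ] F) x := by
    intro x hx
    have hi : Function.Injective (fderiv ℂ f x : E →ₗ[ℂ] F) := by
      rw [← LinearMap.ker_eq_bot, LinearMap.ker_eq_bot']
      exact fun v hv => osg_all _ E F rfl hEF.symm f Ω hΩ hf hinj x hx v hv
    let A := (LinearEquiv.ofInjectiveOfFinrankEq (fderiv ℂ f x : E →ₗ[ℂ] F) hi hEF).toContinuousLinearEquiv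
    refine ⟨A, ?_⟩
    have : (A : E →L[ℂ] F) = fderiv ℂ f x := by
      ext v
      rfl
    rw [this]
    exact osg_strict hf hΩ hx
  have hmap : ∀ x ∈ Ω, ∀ s ∈ 𝓝 x, f '' s ∈ 𝓝 (f x) := by
    intro x hx s hs
    obtain ⟨A, hA⟩ := hinv x hx
    rw [← hA.map_nhds_eq_of_equiv]
    exact image_mem_map hs
  have hop : IsOpen (f '' Ω) := by
    rw [isOpen_iff_mem_nhds]
    rintro _ ⟨x, hx, rfl⟩
    exact hmap x hx Ω (hΩ.mem_nhds hx)
  have hl : ∀ x ∈ Ω, Function.invFunOn f Ω (f x) = x := fun x hx => hinj.leftInvOn_invFunOn hx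
  refine ⟨hop, Function.invFunOn f Ω, ?_, hl⟩
  rintro _ ⟨x, hx, rfl⟩
  obtain ⟨A, hA⟩ := hinv x hx
  have hcont : ContinuousAt (Function.invFunOn f Ω) (f x) := by
    intro N hN
    rw [hl x hx] at hN
    rw [Filter.mem_map]
    refine mem_of_superset (hmap x hx (N ∩ Ω) (inter_mem hN (hΩ.mem_nhds hx))) ?_
    rintro _ ⟨y, hy, rfl⟩
    rw [mem_preimage, hl y hy.2]
    exact hy.1
  have := HasFDerivAt.of_local_left_inverse (f := f) (f' := A) (g := Function.invFunOn f Ω)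
    (a := f x) hcont (by rw [hl x hx]; exact hA.hasFDerivAt) (by
      filter_upwards [hop.mem_nhds ⟨x, hx, rfl⟩] with y hy
      obtain ⟨t, ht, rfl⟩ := hy
      rw [hl t ht])
  exact this.differentiableAt.differentiableWithinAt

end Osgood

section Visc

/-- real-valued plurisubharmonic functions -/
def RSub {n : ℕ} (φ : Cn n → ℝ) (D : Set (Cn n)) : Prop :=
  UpperSemicontinuousOn φ D ∧
  ∀ a ∈ D, ∀ b : Cn n, ∀ r : ℝ, 0 < r →
    (∀ t : ℂ, ‖t‖ ≤ r → a + t • b ∈ D) →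
    ∀ g : ℝ → ℝ, Continuous g →
      (∀ θ : ℝ, φ (a + ((r : ℂ) * Complex.exp (θ * Complex.I)) • b) ≤ g θ) →
      φ a ≤ (1 / (2 * Real.pi)) * ∫ θ in (0:ℝ)..(2 * Real.pi), g θ

theorem visc_bigO {n : ℕ} {g : ℂ → Cn n} {ζ : ℂ} (hg : AnalyticAt ℂ g ζ) :
    ∃ C : ℝ, 0 ≤ C ∧ ∀ᶠ t in 𝓝 (0 : ℂ), ‖g (ζ + t) - g ζ - t • deriv g ζ‖ ≤ C * ‖t‖ ^ 2 := by
  obtain ⟨p, hp⟩ := hg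
  have h := hp.isBigO_sub_partialSum_pow 2
  obtain ⟨C, hC⟩ := h.bound
  refine ⟨max C 0, le_max_right _ _, ?_⟩
  filter_upwards [hC] with t ht
  have h1 : p.partialSum 2 t = g ζ + t • deriv g ζ := by
    rw [FormalMultilinearSeries.partialSum, Finset.sum_range_succ, Finset.sum_range_succ,
      Finset.sum_range_zero, zero_add, hp.coeff_zero, hp.hasDerivAt.deriv]
    congr 1
    rw [p.apply_eq_pow_smul_coeff]
    rw [pow_one]; rfl
  rw [h1] at ht
  rw [sub_sub]
  refine ht.trans ?_
  rw [norm_pow, norm_norm]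
  gcongr
  exact le_max_left _ _

theorem visc_mean {H : ℂ → ℂ} {r : ℝ} (hr : 0 < r) (hH : DifferentiableOn ℂ H (closedBall 0 r)) :
    (1 / (2 * Real.pi)) * ∫ θ in (0:ℝ)..(2 * Real.pi),
      (H ((r : ℂ) * Complex.exp (θ * Complex.I))).re = (H 0).re := by
  have h1 : DiffContOnCl ℂ H (ball 0 |r|) := by
    apply DifferentiableOn.diffContOnCl
    rw [abs_of_pos hr, closure_ball _ hr.ne']
    exact hH
  have h2 := h1.circleAverage
  rw [Real.circleAverage_def] at h2
  have hm : ∀ θ : ℝ, circleMap 0 r θ = (r : ℂ) * Complex.exp (θ * Complex.I) := by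
    intro θ; simp [circleMap]
  simp only [hm] at h2
  have hcont : Continuous fun θ : ℝ => H ((r : ℂ) * Complex.exp (θ * Complex.I)) := by
    refine hH.continuousOn.comp_continuous (by fun_prop) ?_
    intro θ
    simp [mem_closedBall_zero_iff, Complex.norm_exp_ofReal_mul_I, abs_of_pos hr]
  have h3 := Complex.reCLM.intervalIntegral_comp_comm (hcont.intervalIntegrable 0 (2 * Real.pi) (μ := MeasureTheory.volume))
  simp only [Complex.reCLM_apply] at h3
  rw [h3, ← h2]
  simp

/-- local maxima of the penalized function do not exist -/
theorem visc_affine {n : ℕ} {φ : Cn n → ℝ} {D : Set (Cn n)} (hD : IsOpen D) (hφ : RSub φ D)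
    {g : ℂ → Cn n} {k : ℂ → ℂ} {ζ ζ₁ : ℂ} {x : Cn n} (hx : x ∈ D) (hg : AnalyticAt ℂ g ζ)
    (hk : AnalyticAt ℂ k ζ) {ε N : ℝ} (hε : 0 < ε) (hN : 0 ≤ N)
    (hmax : ∀ᶠ q in 𝓝 (x, ζ), φ q.1 - (k q.2).re + (ε / 2) * ‖q.2 - ζ₁‖ ^ 2 - N * ‖q.1 - g q.2‖ ^ 2
      ≤ φ x - (k ζ).re + (ε / 2) * ‖ζ - ζ₁‖ ^ 2 - N * ‖x - g ζ‖ ^ 2) : False := by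
  set b := deriv g ζ with hb
  set h : ℂ → Cn n := fun t => g (ζ + t) - g ζ - t • b with hh
  obtain ⟨C, hC0, hC⟩ := visc_bigO hg
  set d := x - g ζ with hd
  set H : ℂ → ℂ := fun t => k (ζ + t) - k ζ - ε * ((starRingEnd ℂ) (ζ - ζ₁) * t)
    - 2 * N * innerSL ℂ d (h t) with hH
  have htr : Tendsto (fun t : ℂ => ζ + t) (𝓝 0) (𝓝 ζ) := by
    have : Continuous fun t : ℂ => ζ + t := by fun_prop
    simpa using this.tendsto 0
  have hpair : Tendsto (fun t : ℂ => (x + t • b, ζ + t)) (𝓝 0) (𝓝 (x, ζ)) := by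
    have : Continuous fun t : ℂ => (x + t • b, ζ + t) := by fun_prop
    simpa using this.tendsto 0
  have e1 : ∀ᶠ t in 𝓝 (0 : ℂ), DifferentiableAt ℂ H t := by
    filter_upwards [htr.eventually hg.eventually_analyticAt, htr.eventually hk.eventually_analyticAt]
      with t h1 h2
    have hs : DifferentiableAt ℂ (fun t : ℂ => ζ + t) t := by fun_prop
    have h1' : DifferentiableAt ℂ (fun t => g (ζ + t)) t :=
      DifferentiableAt.comp t h1.differentiableAt hs
    have h2' : DifferentiableAt ℂ (fun t => k (ζ + t)) t :=
      DifferentiableAt.comp t h2.differentiableAt hs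
    have h3 : DifferentiableAt ℂ h t := by
      simp only [hh]
      fun_prop
    have h4 : DifferentiableAt ℂ (fun t => innerSL ℂ d (h t)) t :=
      (innerSL ℂ d).differentiableAt.comp t h3
    simp only [hH]
    fun_prop
  have e2 := hpair.eventually hmax
  have e3 : ∀ᶠ t in 𝓝 (0 : ℂ), x + t • b ∈ D :=
    (continuous_fst.tendsto _).comp hpair |>.eventually (hD.mem_nhds hx)
  obtain ⟨r₀, hr₀, hr₀b⟩ := Metric.mem_nhds_iff.1 ((e1.and (e2.and (e3.and hC))))
  obtain ⟨r, hr, hrr, hrs⟩ : ∃ r : ℝ, 0 < r ∧ r < r₀ ∧ N * C ^ 2 * r ^ 2 < ε / 2 := by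
    have : Tendsto (fun r : ℝ => N * C ^ 2 * r ^ 2) (𝓝[>] 0) (𝓝 0) := by
      have : Continuous fun r : ℝ => N * C ^ 2 * r ^ 2 := by fun_prop
      have := this.tendsto 0
      simp only [ne_eq, OfNat.ofNat_ne_zero, not_false_eq_true, zero_pow, mul_zero] at this
      exact this.mono_left nhdsWithin_le_nhds
    have h1 := this.eventually (gt_mem_nhds (show (0:ℝ) < ε / 2 by positivity))
    have h2 := Ioo_mem_nhdsGT hr₀
    obtain ⟨r, h3, h4⟩ := (h1.and h2).exists
    exact ⟨r, h4.1, h4.2, h3⟩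
  have hin : ∀ t : ℂ, ‖t‖ ≤ r → t ∈ ball (0 : ℂ) r₀ := by
    intro t ht
    rw [mem_ball_zero_iff]
    linarith
  have hHd : DifferentiableOn ℂ H (closedBall 0 r) := by
    intro t ht
    exact (hr₀b (hin t (mem_closedBall_zero_iff.1 ht))).1.differentiableWithinAt
  have hcont : Continuous fun θ : ℝ => (H ((r : ℂ) * Complex.exp (θ * Complex.I))).re := by
    refine Complex.continuous_re.comp (hHd.continuousOn.comp_continuous (by fun_prop) ?_)
    intro θ
    simp [mem_closedBall_zero_iff, Complex.norm_exp_ofReal_mul_I, abs_of_pos hr]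
  have key : ∀ t : ℂ, ‖t‖ = r → φ (x + t • b) ≤ φ x - (ε / 2) * r ^ 2 + N * (C * r ^ 2) ^ 2 + (H t).re := by
    intro t ht
    obtain ⟨-, h2, -, h4⟩ := hr₀b (hin t ht.le)
    simp only at h2
    rw [ht] at h4
    have i1 : x + t • b - g (ζ + t) = d - h t := by
      simp only [hd, hh]; abel
    have i2 : ‖d - h t‖ ^ 2 = ‖d‖ ^ 2 - 2 * (innerSL ℂ d (h t)).re + ‖h t‖ ^ 2 := by
      rw [@norm_sub_sq ℂ]
      simp
    have i3 : ‖ζ + t - ζ₁‖ ^ 2 = ‖ζ - ζ₁‖ ^ 2 + 2 * ((starRingEnd ℂ) (ζ - ζ₁) * t).re + ‖t‖ ^ 2 := by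
      rw [Complex.sq_norm, Complex.sq_norm, Complex.sq_norm]
      simp only [Complex.normSq_apply, Complex.add_re, Complex.sub_re, Complex.add_im, Complex.sub_im,
        Complex.mul_re, Complex.conj_re, Complex.conj_im, map_sub]
      ring
    have i4 : (H t).re = (k (ζ + t)).re - (k ζ).re - ε * ((starRingEnd ℂ) (ζ - ζ₁) * t).re
        - 2 * N * (innerSL ℂ d (h t)).re := by
      have a1 : (((ε : ℝ) : ℂ) * ((starRingEnd ℂ) (ζ - ζ₁) * t)).re
        = ε * ((starRingEnd ℂ) (ζ - ζ₁) * t).re := Complex.re_ofReal_mul _ _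
      have a2 : ((2 : ℂ) * (N : ℂ) * innerSL ℂ d (h t)).re = 2 * N * (innerSL ℂ d (h t)).re := by
        have : ((2 : ℂ) * (N : ℂ)) = ((2 * N : ℝ) : ℂ) := by push_cast; ring
        rw [this, Complex.re_ofReal_mul]
      simp only [hH, Complex.sub_re, a1, a2]
    rw [i1, i2, i3, ht] at h2
    have i5 : ‖h t‖ ^ 2 ≤ (C * r ^ 2) ^ 2 := by
      have : ‖h t‖ ≤ C * r ^ 2 := h4
      gcongr
    have i6 : N * ‖h t‖ ^ 2 ≤ N * (C * r ^ 2) ^ 2 := by gcongr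
    rw [i4]
    linarith
  have hsub := hφ.2 x hx b r hr (fun t ht => (hr₀b (hin t ht)).2.2.1)
    (fun θ => φ x - (ε / 2) * r ^ 2 + N * (C * r ^ 2) ^ 2 + (H ((r : ℂ) * Complex.exp (θ * Complex.I))).re)
    (continuous_const.add hcont)
    (fun θ => key _ (by simp [Complex.norm_exp_ofReal_mul_I, abs_of_pos hr]))
  rw [intervalIntegral.integral_add (by simp) (hcont.intervalIntegrable _ _), mul_add,
    visc_mean hr hHd] at hsub
  have hH0 : H 0 = 0 := by simp [hH, hh]
  rw [hH0] at hsub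
  have hpi := Real.pi_pos
  simp only [intervalIntegral.integral_const, sub_zero, smul_eq_mul, Complex.zero_re, add_zero] at hsub
  rw [← mul_assoc, one_div_mul_cancel (by positivity), one_mul] at hsub
  have : N * (C * r ^ 2) ^ 2 = N * C ^ 2 * r ^ 2 * r ^ 2 := by ring
  rw [this] at hsub
  have h2 : N * C ^ 2 * r ^ 2 * r ^ 2 < (ε / 2) * r ^ 2 := by gcongr
  linarith

theorem visc_main {n : ℕ} {φ : Cn n → ℝ} {D : Set (Cn n)} (hD : IsOpen D) (hφ : RSub φ D)
    {g : ℂ → Cn n} {k : ℂ → ℂ} {ζ₁ : ℂ} (hx : g ζ₁ ∈ D) (hg : AnalyticAt ℂ g ζ₁)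
    (hk : AnalyticAt ℂ k ζ₁) (hk0 : k ζ₁ = 0) {ε : ℝ} (hε : 0 < ε)
    (hmax : ∀ᶠ ζ in 𝓝 ζ₁, φ (g ζ) ≤ φ (g ζ₁) + (k ζ).re - ε * ‖ζ - ζ₁‖ ^ 2) : False := by
  obtain ⟨η, hη, hηb⟩ := Metric.nhds_basis_closedBall.mem_iff.1 (hD.mem_nhds hx)
  obtain ⟨δ, hδ, hδb⟩ := Metric.nhds_basis_closedBall.mem_iff.1
    (hg.eventually_analyticAt.and (hk.eventually_analyticAt.and hmax))
  set A := closedBall (g ζ₁) η with hA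
  set B := closedBall ζ₁ δ with hB
  set S := A ×ˢ B with hS
  have hSc : IsCompact S := (isCompact_closedBall _ _).prod (isCompact_closedBall _ _)
  set O := ball (g ζ₁) η ×ˢ ball ζ₁ δ with hO
  have hOo : IsOpen O := isOpen_ball.prod isOpen_ball
  have hOS : O ⊆ S := prod_mono ball_subset_closedBall ball_subset_closedBall
  have hgc : ContinuousOn (fun q : Cn n × ℂ => g q.2) S := by
    intro q hq
    exact ((hδb hq.2).1.continuousAt.comp continuousAt_snd).continuousWithinAt
  have hkc : ContinuousOn (fun q : Cn n × ℂ => k q.2) S := by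
    intro q hq
    exact ((hδb hq.2).2.1.continuousAt.comp continuousAt_snd).continuousWithinAt
  set G : Cn n × ℂ → ℝ := fun q => φ q.1 + (- (k q.2).re + (ε / 2) * ‖q.2 - ζ₁‖ ^ 2) with hG
  have hφS : UpperSemicontinuousOn (fun q : Cn n × ℂ => φ q.1) S :=
    hφ.1.comp continuousOn_fst (fun q hq => hηb hq.1)
  have hGu : UpperSemicontinuousOn G S := by
    apply hφS.add
    apply ContinuousOn.upperSemicontinuousOn
    exact (Complex.continuous_re.comp_continuousOn hkc).neg.add (by fun_prop)
  set c₀ : Cn n × ℂ := (g ζ₁, ζ₁) with hc₀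
  have hc₀O : c₀ ∈ O := ⟨mem_ball_self hη, mem_ball_self hδ⟩
  set K := (S ∩ G ⁻¹' (Ici (φ (g ζ₁)))) \ O with hK
  have hKc : IsCompact K := (hGu.isCompact_inter_preimage_Ici hSc _).diff hOo
  set dd : Cn n × ℂ → ℝ := fun q => ‖q.1 - g q.2‖ ^ 2 with hdd
  have hddc : ContinuousOn dd S := (continuousOn_fst.sub hgc).norm.pow 2
  have hpos : ∀ q ∈ K, 0 < dd q := by
    intro q hq
    by_contra hcon
    have h1 : dd q = 0 := le_antisymm (not_lt.1 hcon) (by positivity)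
    have h2 : q.1 = g q.2 := by
      have : ‖q.1 - g q.2‖ = 0 := by simpa [hdd] using h1
      exact sub_eq_zero.1 (norm_eq_zero.1 this)
    have h3 := (hδb hq.1.1.2).2.2
    have h4 : φ (g ζ₁) ≤ G q := hq.1.2
    simp only [hG, h2] at h4
    have h5 : ‖q.2 - ζ₁‖ ^ 2 ≤ 0 := by
      nlinarith
    have h6 : q.2 = ζ₁ := by
      have : ‖q.2 - ζ₁‖ = 0 := by
        have := sq_nonneg ‖q.2 - ζ₁‖
        exact pow_eq_zero_iff (two_ne_zero) |>.1 (le_antisymm h5 this)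
      exact sub_eq_zero.1 (norm_eq_zero.1 this)
    apply hq.2
    have : q = c₀ := Prod.ext (by rw [h2, h6]) h6
    rw [this]
    exact hc₀O
  obtain ⟨T, hT⟩ := hGu.bddAbove_of_isCompact hSc
  obtain ⟨N, hN, hNK⟩ : ∃ N : ℝ, 0 ≤ N ∧ ∀ q ∈ K, G q - N * dd q < φ (g ζ₁) := by
    rcases K.eq_empty_or_nonempty with h | h
    · exact ⟨0, le_rfl, by simp [h]⟩
    obtain ⟨q₀, hq₀, hmin⟩ := hKc.exists_isMinOn h (hddc.mono (fun q hq => hq.1.1))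
    refine ⟨(|T - φ (g ζ₁)| + 1) / dd q₀, by have := hpos q₀ hq₀; positivity, ?_⟩
    intro q hq
    have h1 : dd q₀ ≤ dd q := hmin hq
    have h0 := hpos q₀ hq₀
    have h2 : G q ≤ T := hT ⟨q, hq.1.1, rfl⟩
    have h3 : (|T - φ (g ζ₁)| + 1) / dd q₀ * dd q ≥ |T - φ (g ζ₁)| + 1 := by
      rw [ge_iff_le, div_mul_eq_mul_div, le_div_iff₀ h0]
      gcongr
    have h4 := le_abs_self (T - φ (g ζ₁))
    linarith
  have hPu : UpperSemicontinuousOn (fun q => G q + - (N * dd q)) S :=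
    hGu.add (ContinuousOn.upperSemicontinuousOn (hddc.const_smul N).neg)
  obtain ⟨q, hq, hqm⟩ := hPu.exists_isMaxOn ⟨c₀, hOS hc₀O⟩ hSc
  have hqc : φ (g ζ₁) ≤ G q - N * dd q := by
    have h1 : G c₀ + -(N * dd c₀) ≤ G q + -(N * dd q) := hqm (hOS hc₀O)
    have h2 : G c₀ = φ (g ζ₁) := by simp [hG, hc₀, hk0]
    have h3 : dd c₀ = 0 := by simp [hdd, hc₀]
    rw [h2, h3] at h1
    linarith
  have hqO : q ∈ O := by
    by_contra hcon
    have hdq : 0 ≤ dd q := by positivity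
    have h1 : φ (g ζ₁) ≤ G q := by nlinarith
    have := hNK q ⟨⟨hq, h1⟩, hcon⟩
    linarith
  refine visc_affine (x := q.1) (ζ := q.2) (ζ₁ := ζ₁) hD hφ (hηb hq.1) (hδb hq.2).1 (hδb hq.2).2.1 hε hN ?_
  filter_upwards [hOo.mem_nhds hqO] with q' hq'
  have h1 : G q' + -(N * dd q') ≤ G q + -(N * dd q) := hqm (hOS hq')
  simp only [hG, hdd] at h1
  linarith

end Visc

section Disc

theorem visc_log {n : ℕ} {φ : Cn n → ℝ} {D : Set (Cn n)} (hD : IsOpen D) (hφ : RSub φ D)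
    {g : ℂ → Cn n} {q : ℂ → ℂ} {ζ₁ : ℂ} (hx : g ζ₁ ∈ D) (hg : AnalyticAt ℂ g ζ₁)
    (hq : AnalyticAt ℂ q ζ₁) (hq0 : q ζ₁ ≠ 0) {ε M : ℝ} (hε : 0 < ε) (hM : 0 < M)
    (hmax : ∀ᶠ ζ in 𝓝 ζ₁, M * φ (g ζ) - Real.log ‖q ζ‖ + ε * ‖ζ‖ ^ 2
      ≤ M * φ (g ζ₁) - Real.log ‖q ζ₁‖ + ε * ‖ζ₁‖ ^ 2) : False := by
  have hM' : (M : ℂ) ≠ 0 := by exact_mod_cast hM.ne'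
  set k : ℂ → ℂ := fun ζ => ((M⁻¹ : ℝ) : ℂ) * (Complex.log (q ζ / q ζ₁)
    - ((2 * ε : ℝ) : ℂ) * ((starRingEnd ℂ) ζ₁ * (ζ - ζ₁))) with hk
  have hka : AnalyticAt ℂ k ζ₁ := by
    have h1 : AnalyticAt ℂ (fun ζ => Complex.log (q ζ / q ζ₁)) ζ₁ := by
      apply AnalyticAt.clog
      · exact hq.div analyticAt_const hq0
      · rw [div_self hq0]
        exact Complex.one_mem_slitPlane
    have h2 : AnalyticAt ℂ (fun ζ => ((2 * ε : ℝ) : ℂ) * ((starRingEnd ℂ) ζ₁ * (ζ - ζ₁))) ζ₁ :=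
      analyticAt_const.mul (analyticAt_const.mul (analyticAt_id.sub analyticAt_const))
    exact analyticAt_const.mul (h1.sub h2)
  refine visc_main hD hφ hx hg hka (by simp [hk, hq0]) (ε := ε / M) (by positivity) ?_
  filter_upwards [hmax, hq.continuousAt.eventually_ne hq0] with ζ h1 h2
  have i1 : (k ζ).re = M⁻¹ * (Real.log ‖q ζ‖ - Real.log ‖q ζ₁‖
      - 2 * ε * ((starRingEnd ℂ) ζ₁ * (ζ - ζ₁)).re) := by
    simp only [hk]
    rw [Complex.re_ofReal_mul, Complex.sub_re, Complex.re_ofReal_mul, Complex.log_re, norm_div,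
      Real.log_div (norm_ne_zero_iff.2 h2) (norm_ne_zero_iff.2 hq0)]
  have i2 : ‖ζ‖ ^ 2 = ‖ζ - ζ₁‖ ^ 2 + 2 * ((starRingEnd ℂ) ζ₁ * (ζ - ζ₁)).re + ‖ζ₁‖ ^ 2 := by
    rw [Complex.sq_norm, Complex.sq_norm, Complex.sq_norm]
    simp only [Complex.normSq_apply, Complex.sub_re, Complex.sub_im,
      Complex.mul_re, Complex.conj_re, Complex.conj_im]
    ring
  rw [i1]
  have h3 : M * φ (g ζ) ≤ M * (φ (g ζ₁) + M⁻¹ * (Real.log ‖q ζ‖ - Real.log ‖q ζ₁‖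
      - 2 * ε * ((starRingEnd ℂ) ζ₁ * (ζ - ζ₁)).re) - ε / M * ‖ζ - ζ₁‖ ^ 2) := by
    have : M * (φ (g ζ₁) + M⁻¹ * (Real.log ‖q ζ‖ - Real.log ‖q ζ₁‖
      - 2 * ε * ((starRingEnd ℂ) ζ₁ * (ζ - ζ₁)).re) - ε / M * ‖ζ - ζ₁‖ ^ 2)
      = M * φ (g ζ₁) + (Real.log ‖q ζ‖ - Real.log ‖q ζ₁‖
      - 2 * ε * ((starRingEnd ℂ) ζ₁ * (ζ - ζ₁)).re) - ε * ‖ζ - ζ₁‖ ^ 2 := by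
      field_simp
    rw [this]
    rw [i2] at h1
    linarith
  exact le_of_mul_le_mul_left h3 hM

theorem disc_circle {ζ ζ₀ : ℂ} (hζ : ‖ζ‖ = 1) : ‖1 - (starRingEnd ℂ) ζ₀ * ζ‖ = ‖ζ - ζ₀‖ := by
  have h1 : ζ * (starRingEnd ℂ) ζ = 1 := by
    rw [Complex.mul_conj, Complex.normSq_eq_norm_sq, hζ]; simp
  have h2 : 1 - (starRingEnd ℂ) ζ₀ * ζ = ζ * (starRingEnd ℂ) (ζ - ζ₀) := by
    rw [map_sub, mul_sub, h1]; ring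
  rw [h2, norm_mul, hζ, one_mul, RCLike.norm_conj]

theorem disc_ne {ζ ζ₀ : ℂ} (hζ : ‖ζ‖ ≤ 1) (hζ₀ : ‖ζ₀‖ < 1) : 1 - (starRingEnd ℂ) ζ₀ * ζ ≠ 0 := by
  intro h
  have h1 : (starRingEnd ℂ) ζ₀ * ζ = 1 := (sub_eq_zero.1 h).symm
  have h2 := congrArg norm h1
  rw [norm_mul, RCLike.norm_conj, norm_one] at h2
  nlinarith [norm_nonneg ζ, norm_nonneg ζ₀]

theorem disc_est_eps {n : ℕ} {φ : Cn n → ℝ} {D : Set (Cn n)} (hD : IsOpen D) (hφ : RSub φ D)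
    (hneg : ∀ x ∈ D, φ x ≤ 0) {c M ρ : ℝ} {w₀ : Cn n} (hc : 0 < c) (hM : 0 < M) (hρ : 1 < ρ)
    (h1 : ∀ x ∈ D, ‖x - w₀‖ = 1 → φ x ≤ -c) (h2 : ∀ x ∈ D, ‖x - w₀‖ = ρ → -(c / 2) < φ x)
    (hMc : Real.log ρ < M * c / 2) {g : ℂ → Cn n} (hg : AnalyticOnNhd ℂ g (closedBall 0 1))
    (hgD : ∀ ζ ∈ closedBall (0 : ℂ) 1, g ζ ∈ D) {ζ₀ : ℂ} (hζ₀ : ‖ζ₀‖ < 1) (hw : g ζ₀ = w₀)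
    (hne : ∀ ζ ∈ closedBall (0 : ℂ) 1, dslope g ζ₀ ζ ≠ 0) (hz : 1 ≤ ‖g 0 - w₀‖)
    {ε : ℝ} (hε : 0 < ε) : 2 * M * φ (g 0) - Real.log ‖ζ₀‖ ≤ ε := by
  set g₁ := dslope g ζ₀ with hg₁
  set bl : ℂ → ℂ := fun ζ => 1 - (starRingEnd ℂ) ζ₀ * ζ with hbl
  have hbla : ∀ ζ, AnalyticAt ℂ bl ζ := fun ζ =>
    analyticAt_const.sub (analyticAt_const.mul analyticAt_id)
  have hbl0 : ∀ ζ ∈ closedBall (0 : ℂ) 1, bl ζ ≠ 0 := fun ζ hζ =>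
    disc_ne (mem_closedBall_zero_iff.1 hζ) hζ₀
  have hζ₀m : ζ₀ ∈ closedBall (0 : ℂ) 1 := mem_closedBall_zero_iff.2 hζ₀.le
  have hg₁a : ∀ ζ ∈ closedBall (0 : ℂ) 1, AnalyticAt ℂ g₁ ζ := by
    have ha : ∀ ζ ∈ {z | AnalyticAt ℂ g z}, DifferentiableAt ℂ g ζ := fun ζ hζ => hζ.differentiableAt
    have hop : IsOpen {z | AnalyticAt ℂ g z} := isOpen_analyticAt ℂ g
    have hd : DifferentiableOn ℂ g₁ {z | AnalyticAt ℂ g z} := by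
      rw [hg₁, Complex.differentiableOn_dslope (hop.mem_nhds (hg ζ₀ hζ₀m))]
      exact fun ζ hζ => (ha ζ hζ).differentiableWithinAt
    exact fun ζ hζ => hd.analyticAt (hop.mem_nhds (hg ζ hζ))
  have hfac : ∀ ζ, ‖g ζ - w₀‖ = ‖ζ - ζ₀‖ * ‖g₁ ζ‖ := by
    intro ζ
    rw [← norm_smul, hg₁, sub_smul_dslope, hw]
  set Lρ := Real.log ρ + M * c / 2 with hLρ
  have hlρ : 0 < Real.log ρ := Real.log_pos hρ
  set w₁ : ℂ → ℝ := fun ζ => 2 * M * φ (g ζ) + (- Real.log ‖ζ - ζ₀‖ + Real.log ‖bl ζ‖ + ε * ‖ζ‖ ^ 2) with hw₁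
  set w₂ : ℂ → ℝ := fun ζ => M * φ (g ζ) + (Real.log ‖g₁ ζ‖ - Lρ + Real.log ‖bl ζ‖ + ε * ‖ζ‖ ^ 2) with hw₂
  have hgc : ContinuousOn g (closedBall 0 1) := hg.continuousOn
  have hdc : ContinuousOn (fun ζ => ‖g ζ - w₀‖) (closedBall 0 1) := (hgc.sub continuousOn_const).norm
  set K₁ := closedBall (0 : ℂ) 1 ∩ (fun ζ => ‖g ζ - w₀‖) ⁻¹' (Ici 1) with hK₁
  set K₂ := closedBall (0 : ℂ) 1 ∩ (fun ζ => ‖g ζ - w₀‖) ⁻¹' (Iic ρ) with hK₂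
  have hcB : IsCompact (closedBall (0 : ℂ) 1) := isCompact_closedBall _ _
  have hK₁c : IsCompact K₁ := hcB.of_isClosed_subset
    (hdc.preimage_isClosed_of_isClosed isClosed_closedBall isClosed_Ici) inter_subset_left
  have hK₂c : IsCompact K₂ := hcB.of_isClosed_subset
    (hdc.preimage_isClosed_of_isClosed isClosed_closedBall isClosed_Iic) inter_subset_left
  have h0 : (0 : ℂ) ∈ K₁ := ⟨by simp, hz⟩
  have hζ₀K : ζ₀ ∈ K₂ := by
    refine ⟨hζ₀m, ?_⟩
    simp only [mem_preimage, hw, sub_self, norm_zero, mem_Iic]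
    linarith
  have hsm : ∀ ζ ∈ K₁, ζ - ζ₀ ≠ 0 := by
    intro ζ hζ h
    have h3 : (1 : ℝ) ≤ ‖g ζ - w₀‖ := hζ.2
    rw [hfac, h, norm_zero, zero_mul] at h3
    linarith
  have hφg : UpperSemicontinuousOn (fun ζ => φ (g ζ)) (closedBall 0 1) :=
    hφ.1.comp hgc hgD
  have hmul : ∀ a : ℝ, 0 < a → UpperSemicontinuousOn (fun ζ => a * φ (g ζ)) (closedBall 0 1) := by
    intro a ha
    exact (continuous_const_mul a).comp_upperSemicontinuousOn hφg
      (fun x y hxy => mul_le_mul_of_nonneg_left hxy ha.le)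
  have hblc : ContinuousOn (fun ζ => Real.log ‖bl ζ‖) (closedBall 0 1) := by
    apply ContinuousOn.log
    · exact fun ζ _ => (hbla ζ).continuousAt.norm.continuousWithinAt
    · exact fun ζ hζ => norm_ne_zero_iff.2 (hbl0 ζ hζ)
  have hεc : Continuous fun ζ : ℂ => ε * ‖ζ‖ ^ 2 := by fun_prop
  have hu₁ : UpperSemicontinuousOn w₁ K₁ := by
    refine ((hmul (2 * M) (by positivity)).mono inter_subset_left).add ?_
    apply ContinuousOn.upperSemicontinuousOn
    refine (ContinuousOn.add ?_ (hblc.mono inter_subset_left)).add hεc.continuousOn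
    apply ContinuousOn.neg
    apply ContinuousOn.log (by fun_prop)
    exact fun ζ hζ => norm_ne_zero_iff.2 (hsm ζ hζ)
  have hu₂ : UpperSemicontinuousOn w₂ K₂ := by
    refine ((hmul M hM).mono inter_subset_left).add ?_
    apply ContinuousOn.upperSemicontinuousOn
    refine (ContinuousOn.add ?_ (hblc.mono inter_subset_left)).add hεc.continuousOn
    refine ContinuousOn.sub ?_ continuousOn_const
    apply ContinuousOn.log
    · exact fun ζ hζ => (hg₁a ζ hζ.1).continuousAt.norm.continuousWithinAt
    · exact fun ζ hζ => norm_ne_zero_iff.2 (hne ζ hζ.1)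
  obtain ⟨α, hα, hαm⟩ := hu₁.exists_isMaxOn ⟨0, h0⟩ hK₁c
  obtain ⟨β, hβ, hβm⟩ := hu₂.exists_isMaxOn ⟨ζ₀, hζ₀K⟩ hK₂c
  have hlogfac : ∀ ζ ∈ closedBall (0 : ℂ) 1, ζ - ζ₀ ≠ 0 →
      Real.log ‖g ζ - w₀‖ = Real.log ‖ζ - ζ₀‖ + Real.log ‖g₁ ζ‖ := by
    intro ζ hζ hζ'
    rw [hfac, Real.log_mul (norm_ne_zero_iff.2 hζ') (norm_ne_zero_iff.2 (hne ζ hζ))]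
  have hdiff : ∀ ζ ∈ K₁, w₂ ζ - w₁ ζ = - M * φ (g ζ) + Real.log ‖g ζ - w₀‖ - Lρ := by
    intro ζ hζ
    rw [hlogfac ζ hζ.1 (hsm ζ hζ)]
    simp only [hw₁, hw₂]
    ring
  have hw10 : w₁ 0 = 2 * M * φ (g 0) - Real.log ‖ζ₀‖ := by
    simp [hw₁, hbl]
    ring
  rw [← hw10]
  -- interior neighbourhoods
  have hdat : ∀ ζ ∈ closedBall (0 : ℂ) 1, ContinuousAt (fun ζ => ‖g ζ - w₀‖) ζ := fun ζ hζ =>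
    ((hg ζ hζ).continuousAt.sub continuousAt_const).norm
  have hball : ∀ ζ : ℂ, ‖ζ‖ < 1 → ∀ᶠ ξ in 𝓝 ζ, ξ ∈ closedBall (0 : ℂ) 1 := by
    intro ζ hζ
    exact mem_of_superset (isOpen_ball.mem_nhds (mem_ball_zero_iff.2 hζ)) ball_subset_closedBall
  rcases le_total (w₂ β) (w₁ α) with hcmp | hcmp
  · refine (hαm h0).trans ?_
    have hα1 : ‖α‖ ≤ 1 := mem_closedBall_zero_iff.1 hα.1
    rcases hα1.lt_or_eq with hlt | heq
    · exfalso
      have hαd : (1 : ℝ) ≤ ‖g α - w₀‖ := hα.2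
      rcases hαd.lt_or_eq with hlt' | heq'
      · refine visc_log hD hφ (q := fun ζ => (ζ - ζ₀) / bl ζ) (hgD α hα.1) (hg α hα.1) ?_ ?_ hε
          (M := 2 * M) (by positivity) ?_
        · exact (analyticAt_id.sub analyticAt_const).div (hbla α) (hbl0 α hα.1)
        · exact div_ne_zero (hsm α hα) (hbl0 α hα.1)
        · filter_upwards [hball α hlt, (hdat α hα.1).eventually (lt_mem_nhds hlt')] with ζ a1 a2
          have hζK : ζ ∈ K₁ := ⟨a1, a2.le⟩
          have a3 : w₁ ζ ≤ w₁ α := hαm hζK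
          rw [norm_div, norm_div, Real.log_div (norm_ne_zero_iff.2 (hsm ζ hζK)) (norm_ne_zero_iff.2 (hbl0 ζ a1)),
            Real.log_div (norm_ne_zero_iff.2 (hsm α hα)) (norm_ne_zero_iff.2 (hbl0 α hα.1))]
          simp only [hw₁] at a3
          linarith
      · have hα2 : α ∈ K₂ := ⟨hα.1, by rw [mem_preimage, mem_Iic]; linarith⟩
        have a1 : w₂ α ≤ w₂ β := hβm hα2
        have a2 := hdiff α hα
        rw [← heq', Real.log_one] at a2
        have a3 := h1 (g α) (hgD α hα.1) heq'.symm
        have a4 : M * φ (g α) ≤ M * (-c) := by gcongr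
        linarith
    · simp only [hw₁, hbl]
      rw [disc_circle heq, heq]
      have := hneg _ (hgD α hα.1)
      nlinarith
  · refine (hαm h0).trans (hcmp.trans ?_)
    have hβ1 : ‖β‖ ≤ 1 := mem_closedBall_zero_iff.1 hβ.1
    have hβd : ‖g β - w₀‖ ≤ ρ := hβ.2
    rcases hβ1.lt_or_eq with hlt | heq
    · exfalso
      rcases hβd.lt_or_eq with hlt' | heq'
      · obtain ⟨ℓ, hℓ1, hℓ⟩ := exists_dual_vector ℂ (g₁ β) (norm_ne_zero_iff.2 (hne β hβ.1))
        have hℓ' : ‖ℓ (g₁ β)‖ = ‖g₁ β‖ := by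
          rw [hℓ]; simp
        have hℓ0 : ℓ (g₁ β) ≠ 0 := by
          rw [← norm_ne_zero_iff, hℓ', norm_ne_zero_iff]
          exact hne β hβ.1
        have hℓa : AnalyticAt ℂ (fun ζ => ℓ (g₁ ζ)) β := (ℓ.analyticAt _).comp (hg₁a β hβ.1)
        refine visc_log hD hφ (q := fun ζ => (ℓ (g₁ ζ) * bl ζ)⁻¹) (hgD β hβ.1) (hg β hβ.1) ?_ ?_ hε
          (M := M) hM ?_
        · exact (hℓa.mul (hbla β)).inv (mul_ne_zero hℓ0 (hbl0 β hβ.1))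
        · exact inv_ne_zero (mul_ne_zero hℓ0 (hbl0 β hβ.1))
        · filter_upwards [hball β hlt, (hdat β hβ.1).eventually (gt_mem_nhds hlt'),
            hℓa.continuousAt.eventually_ne hℓ0] with ζ a1 a2 a0
          have hζK : ζ ∈ K₂ := ⟨a1, a2.le⟩
          have a3 : w₂ ζ ≤ w₂ β := hβm hζK
          rw [norm_inv, norm_inv, norm_mul, norm_mul, Real.log_inv, Real.log_inv,
            Real.log_mul (norm_ne_zero_iff.2 a0) (norm_ne_zero_iff.2 (hbl0 ζ a1)),
            Real.log_mul (norm_ne_zero_iff.2 hℓ0) (norm_ne_zero_iff.2 (hbl0 β hβ.1)), hℓ']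
          have a4 : Real.log ‖ℓ (g₁ ζ)‖ ≤ Real.log ‖g₁ ζ‖ := by
            apply Real.log_le_log (norm_pos_iff.2 a0)
            have := ℓ.le_opNorm (g₁ ζ)
            rwa [hℓ1, one_mul] at this
          simp only [hw₂] at a3
          linarith
      · have hβ2 : β ∈ K₁ := ⟨hβ.1, by rw [mem_preimage, mem_Ici, heq']; linarith⟩
        have a1 : w₁ β ≤ w₁ α := hαm hβ2
        have a2 := hdiff β hβ2
        rw [heq'] at a2
        have a3 := h2 (g β) (hgD β hβ.1) heq'
        have a4 : M * (-(c / 2)) < M * φ (g β) := by gcongr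
        linarith
    · have hβ0 : β - ζ₀ ≠ 0 := by
        intro h
        have : β = ζ₀ := sub_eq_zero.1 h
        rw [this] at heq
        linarith
      have a1 := hlogfac β hβ.1 hβ0
      have a2 : Real.log ‖g β - w₀‖ ≤ Real.log ρ := by
        apply Real.log_le_log _ hβd
        rw [hfac]
        exact mul_pos (norm_pos_iff.2 hβ0) (norm_pos_iff.2 (hne β hβ.1))
      simp only [hw₂, hbl]
      rw [disc_circle heq, heq]
      have := hneg _ (hgD β hβ.1)
      nlinarith

theorem disc_est_s8 {n : ℕ} {φ : Cn n → ℝ} {D : Set (Cn n)} (hD : IsOpen D) (hφ : RSub φ D)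
    (hneg : ∀ x ∈ D, φ x ≤ 0) {c M ρ : ℝ} {w₀ : Cn n} (hc : 0 < c) (hM : 0 < M) (hρ : 1 < ρ)
    (h1 : ∀ x ∈ D, ‖x - w₀‖ = 1 → φ x ≤ -c) (h2 : ∀ x ∈ D, ‖x - w₀‖ = ρ → -(c / 2) < φ x)
    (hMc : Real.log ρ < M * c / 2) {g : ℂ → Cn n} (hg : AnalyticOnNhd ℂ g (closedBall 0 1))
    (hgD : ∀ ζ ∈ closedBall (0 : ℂ) 1, g ζ ∈ D) {ζ₀ : ℂ} (hζ₀ : ‖ζ₀‖ < 1) (hw : g ζ₀ = w₀)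
    (hne : ∀ ζ ∈ closedBall (0 : ℂ) 1, dslope g ζ₀ ζ ≠ 0) (hz : 1 ≤ ‖g 0 - w₀‖) :
    Real.exp (2 * M * φ (g 0)) ≤ ‖ζ₀‖ := by
  have hpos : 0 < ‖ζ₀‖ := by
    rw [norm_pos_iff]
    intro h
    rw [← hw, h, sub_self, norm_zero] at hz
    linarith
  rw [← Real.le_log_iff_exp_le hpos]
  have := le_of_forall_pos_le_add (a := 2 * M * φ (g 0) - Real.log ‖ζ₀‖) (b := 0) (fun ε hε => by
    rw [zero_add]
    exact disc_est_eps hD hφ hneg hc hM hρ h1 h2 hMc hg hgD hζ₀ hw hne hz hε)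
  linarith

end Disc

theorem peak_real {n : ℕ} {D : Set (Cn n)} {φ : Cn n → EReal} (hφ : IsPshPeakFnAtInfty D φ) :
    ∃ ψ : Cn n → ℝ, RSub ψ D ∧ (∀ x ∈ D, ψ x ≤ 0) ∧
      (∀ R : ℝ, ∃ c > 0, ∀ x ∈ D, ‖x‖ ≤ R → ψ x ≤ -c) ∧
      (∀ c > 0, ∃ R : ℝ, ∀ x ∈ D, R ≤ ‖x‖ → -c < ψ x) ∧
      (∀ m : ℝ, 0 < m → ∀ x ∈ D, erexp ((m : EReal) * φ x) ≤ Real.exp (m * ψ x)) := by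
  obtain ⟨⟨husc, hsub⟩, htend, hpeak⟩ := hφ
  have hneg : ∀ x ∈ D, φ x < 0 := by
    intro x hx
    obtain ⟨c, hc, h⟩ := hpeak {x}ᶜ (by
      rw [← Bornology.isCobounded_def, Bornology.isCobounded_compl_iff]
      exact Bornology.isBounded_singleton)
    refine (h x ⟨hx, by simp⟩).trans_lt ?_
    exact_mod_cast hc
  set ψ : Cn n → ℝ := fun x => (max (φ x) ((-1 : ℝ) : EReal)).toReal with hψ
  have hψe : ∀ x ∈ D, ((ψ x : ℝ) : EReal) = max (φ x) ((-1 : ℝ) : EReal) := by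
    intro x hx
    apply EReal.coe_toReal
    · apply ne_of_lt
      apply max_lt
      · exact (hneg x hx).trans (EReal.zero_lt_top)
      · exact EReal.coe_lt_top _
    · apply ne_of_gt
      exact lt_of_lt_of_le (EReal.bot_lt_coe (-1)) (le_max_right _ _)
  have hle : ∀ x ∈ D, ∀ y : ℝ, ψ x ≤ y ↔ φ x ≤ (y : EReal) ∧ -1 ≤ y := by
    intro x hx y
    rw [← EReal.coe_le_coe_iff, hψe x hx, max_le_iff, EReal.coe_le_coe_iff]
  have hlt : ∀ x ∈ D, ∀ y : ℝ, ψ x < y ↔ φ x < (y : EReal) ∧ -1 < y := by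
    intro x hx y
    rw [← EReal.coe_lt_coe_iff, hψe x hx, max_lt_iff, EReal.coe_lt_coe_iff]
  refine ⟨ψ, ⟨?_, ?_⟩, ?_, ?_, ?_, ?_⟩
  · intro x hx y hy
    have h1 := (hlt x hx y).1 hy
    filter_upwards [husc x hx (y : EReal) h1.1, self_mem_nhdsWithin] with x' h2 hx'
    exact (hlt x' hx' y).2 ⟨h2, h1.2⟩
  · intro a ha b r hr hin g hg hbd
    have hmem : ∀ θ : ℝ, a + ((r : ℂ) * Complex.exp (θ * Complex.I)) • b ∈ D := fun θ =>
      hin _ (by simp [Complex.norm_exp_ofReal_mul_I, abs_of_pos hr])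
    rw [hle a ha]
    refine ⟨hsub a ha b r hr hin g hg (fun θ => ((hle _ (hmem θ) _).1 (hbd θ)).1), ?_⟩
    have hpi := Real.pi_pos
    have h1 : ∫ θ in (0:ℝ)..(2 * Real.pi), (-1 : ℝ) ≤ ∫ θ in (0:ℝ)..(2 * Real.pi), g θ := by
      apply intervalIntegral.integral_mono_on (by positivity) (by simp) (hg.intervalIntegrable _ _)
      intro θ _
      exact ((hle _ (hmem θ) _).1 (hbd θ)).2
    have h2 : (1 / (2 * Real.pi)) * (∫ θ in (0:ℝ)..(2 * Real.pi), (-1 : ℝ)) = -1 := by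
      simp
      field_simp
    rw [← h2]
    gcongr
  · intro x hx
    rw [hle x hx]
    exact ⟨by simpa using (hneg x hx).le, by norm_num⟩
  · intro R
    obtain ⟨c, hc, h⟩ := hpeak (closedBall 0 R)ᶜ (by
      rw [← Bornology.isCobounded_def, Bornology.isCobounded_compl_iff]
      exact isBounded_closedBall)
    refine ⟨min (-c) 1, by simp [hc], ?_⟩
    intro x hx hxR
    rw [hle x hx]
    constructor
    · refine (h x ⟨hx, by simpa using hxR⟩).trans ?_
      rw [EReal.coe_le_coe_iff]
      have := min_le_left (-c) 1
      linarith
    · have := min_le_right (-c) 1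
      linarith
  · intro c hc
    have h1 : ∀ᶠ x in Bornology.cobounded (Cn n) ⊓ 𝓟 D, ((-c : ℝ) : EReal) < φ x := by
      apply htend.eventually
      apply lt_mem_nhds
      exact_mod_cast (neg_lt_zero.2 hc)
    rw [eventually_inf_principal, ← comap_norm_atTop, eventually_comap] at h1
    obtain ⟨R, hR⟩ := eventually_atTop.1 h1
    refine ⟨R, fun x hx hxR => ?_⟩
    have := hR ‖x‖ hxR x rfl hx
    rw [← EReal.coe_lt_coe_iff, hψe x hx]
    exact lt_of_lt_of_le this (le_max_left _ _)
  · intro m hm x hx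
    by_cases hbot : φ x = ⊥
    · rw [hbot, EReal.coe_mul_bot_of_pos hm, erexp, if_pos rfl]
      exact (Real.exp_pos _).le
    · have htop : φ x ≠ ⊤ := ((hneg x hx).trans EReal.zero_lt_top).ne
      obtain ⟨a, ha⟩ : ∃ a : ℝ, φ x = (a : EReal) := ⟨(φ x).toReal, (EReal.coe_toReal htop hbot).symm⟩
      have h1 : a ≤ ψ x := by
        rw [← EReal.coe_le_coe_iff, hψe x hx, ha]
        exact le_max_left _ _
      rw [ha, ← EReal.coe_mul, erexp, if_neg (EReal.coe_ne_bot _), if_neg (EReal.coe_ne_top _),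
        EReal.toReal_coe, Real.exp_le_exp]
      gcongr

theorem embed_est {n : ℕ} {ψ : Cn n → ℝ} {D : Set (Cn n)} (hD : IsOpen D) (hψ : RSub ψ D)
    (hneg : ∀ x ∈ D, ψ x ≤ 0) {c M R ρ : ℝ} (hc : 0 < c) (hM : 0 < M) (hρ : 1 < ρ)
    (h1 : ∀ x ∈ D, ‖x‖ ≤ R + 1 → ψ x ≤ -c) (h2 : ∀ x ∈ D, ρ - R ≤ ‖x‖ → -(c / 2) < ψ x)
    (hMc : Real.log ρ < M * c / 2) {f : Cn n → Cn n} (hf : DifferentiableOn ℂ f D)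
    (hinj : InjOn f D) {z : Cn n} (hz : z ∈ D) (hzR : R + 1 < ‖z‖) (hfz : f z = 0) {r : ℝ}
    (hr : ball (0 : Cn n) r ⊆ f '' D) {w : Cn n} (hw : w ∈ D) (hwR : ‖w‖ ≤ R) :
    Real.exp (2 * M * ψ z) * r ≤ ‖f w‖ := by
  by_contra hcon
  push Not at hcon
  set e := Real.exp (2 * M * ψ z) with he
  have he0 : 0 < e := Real.exp_pos _
  have he1 : e ≤ 1 := by
    rw [he, Real.exp_le_one_iff]
    have := hneg z hz
    nlinarith
  obtain ⟨r', hr'1, hr'2⟩ := exists_between (show ‖f w‖ / e < r by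
    rw [div_lt_iff₀ he0, mul_comm]; exact hcon)
  have hyr : ‖f w‖ < r' := by
    refine lt_of_le_of_lt ?_ hr'1
    rw [le_div_iff₀ he0]
    exact mul_le_of_le_one_right (norm_nonneg _) he1
  set y := f w with hy
  have hy0 : y ≠ 0 := by
    intro h
    have : w = z := hinj hw hz (by rw [← hy, h, hfz])
    rw [this] at hwR
    linarith
  have hyp : 0 < ‖y‖ := norm_pos_iff.2 hy0
  have hr'0 : 0 < r' := hyp.trans hyr
  obtain ⟨hop, h, hh, hl⟩ := osg_inverse rfl hD hf hinj
  have hrinv : ∀ x ∈ f '' D, f (h x) = x ∧ h x ∈ D := by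
    rintro _ ⟨x, hx, rfl⟩
    rw [hl x hx]
    exact ⟨rfl, hx⟩
  set a : Cn n := ((r' / ‖y‖ : ℝ) : ℂ) • y with ha
  have han : ‖a‖ = r' := by
    rw [ha, norm_smul, Complex.norm_real, Real.norm_eq_abs, abs_of_pos (by positivity)]
    field_simp
  have ha0 : a ≠ 0 := by
    rw [← norm_pos_iff, han]; exact hr'0
  set g : ℂ → Cn n := fun ζ => h (ζ • a) with hg
  set ζ₀ : ℂ := ((‖y‖ / r' : ℝ) : ℂ) with hζ₀
  have hζ₀n : ‖ζ₀‖ = ‖y‖ / r' := by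
    rw [hζ₀, Complex.norm_real, Real.norm_eq_abs, abs_of_pos (by positivity)]
  have hζ₀1 : ‖ζ₀‖ < 1 := by
    rw [hζ₀n, div_lt_one hr'0]; exact hyr
  have hζ₀a : ζ₀ • a = y := by
    rw [hζ₀, ha, smul_smul, ← Complex.ofReal_mul]
    have : ‖y‖ / r' * (r' / ‖y‖) = 1 := by field_simp
    rw [this]; simp
  have hin : ∀ ζ ∈ closedBall (0 : ℂ) 1, ζ • a ∈ f '' D := by
    intro ζ hζ
    apply hr
    rw [mem_ball_zero_iff, norm_smul, han]
    have := mem_closedBall_zero_iff.1 hζ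
    nlinarith
  have hsa : ∀ ζ : ℂ, HasDerivAt (fun ζ : ℂ => ζ • a) a ζ := by
    intro ζ
    simpa using (hasDerivAt_id ζ).smul_const a
  set W := (fun ζ : ℂ => ζ • a) ⁻¹' (f '' D) with hW
  have hWo : IsOpen W := hop.preimage (by fun_prop)
  have hgd : DifferentiableOn ℂ g W := by
    intro ζ hζ
    exact (DifferentiableAt.comp ζ (hh.differentiableAt (hop.mem_nhds hζ))
      (hsa ζ).differentiableAt).differentiableWithinAt
  have hBW : closedBall (0 : ℂ) 1 ⊆ W := fun ζ hζ => hin ζ hζ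
  have hga : AnalyticOnNhd ℂ g (closedBall 0 1) := fun ζ hζ =>
    hgd.analyticAt (hWo.mem_nhds (hBW hζ))
  have hgD : ∀ ζ ∈ closedBall (0 : ℂ) 1, g ζ ∈ D := fun ζ hζ => (hrinv _ (hin ζ hζ)).2
  have hfg : ∀ ζ ∈ W, f (g ζ) = ζ • a := fun ζ hζ => (hrinv _ hζ).1
  have hg0 : g 0 = z := by
    simp only [hg, zero_smul]
    rw [← hfz, hl z hz]
  have hgζ₀ : g ζ₀ = w := by
    simp only [hg]
    rw [hζ₀a, hy, hl w hw]
  have hζ₀m : ζ₀ ∈ closedBall (0 : ℂ) 1 := mem_closedBall_zero_iff.2 hζ₀1.le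
  have hne : ∀ ζ ∈ closedBall (0 : ℂ) 1, dslope g ζ₀ ζ ≠ 0 := by
    intro ζ hζ h0
    by_cases hζζ : ζ = ζ₀
    · rw [hζζ, dslope_same] at h0
      have d1 : HasDerivAt (fun ζ => f (g ζ)) (fderiv ℂ f (g ζ₀) (deriv g ζ₀)) ζ₀ :=
        (hf.differentiableAt (hD.mem_nhds (hgD ζ₀ hζ₀m))).hasFDerivAt.comp_hasDerivAt ζ₀
          (hga ζ₀ hζ₀m).differentiableAt.hasDerivAt
      have d2 : HasDerivAt (fun ζ => f (g ζ)) a ζ₀ := by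
        refine (hsa ζ₀).congr_of_eventuallyEq ?_
        filter_upwards [hWo.mem_nhds (hBW hζ₀m)] with ξ hξ
        exact hfg ξ hξ
      have := d1.unique d2
      rw [h0, map_zero] at this
      exact ha0 this.symm
    · have h3 := sub_smul_dslope g ζ₀ ζ
      rw [h0, smul_zero] at h3
      have h4 : g ζ = g ζ₀ := (sub_eq_zero.1 h3.symm)
      have h5 := congrArg f h4
      rw [hfg ζ (hBW hζ), hfg ζ₀ (hBW hζ₀m)] at h5
      exact hζζ (smul_left_injective ℂ ha0 h5)
  have key := disc_est_s8 hD hψ hneg hc hM hρ (w₀ := w) (fun x hx hxw => h1 x hx (by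
      have := norm_le_norm_add_norm_sub' x w
      linarith)) (fun x hx hxw => h2 x hx (by
      have := norm_sub_le x w
      linarith)) hMc hga hgD hζ₀1 hgζ₀ hne (by
      rw [hg0]
      have := norm_sub_norm_le z w
      linarith)
  rw [hg0, hζ₀n, le_div_iff₀ hr'0] at key
  rw [div_lt_iff₀ he0] at hr'1
  have : e * r' = r' * e := mul_comm _ _
  linarith

/-- Quantitative localization of the squeezing function at `∞` for an
unbounded domain with a psh peak function at `∞`. -/
theorem squeezing_localization_at_infty {n : ℕ} (D : Set (Cn n)) (hD : IsOpen D)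
    (hDconn : IsConnected D) (hDunb : ¬ Bornology.IsBounded D)
    (φ : Cn n → EReal) (hφ : IsPshPeakFnAtInfty D φ) :
    ∀ U ∈ Bornology.cobounded (Cn n), ∃ V ∈ Bornology.cobounded (Cn n), V ⊆ U ∧
      ∃ m : ℝ, 0 < m ∧ ∀ z ∈ D ∩ V,
        squeezing (D ∩ U) z ≥ erexp ((m : EReal) * φ z) * squeezing D z := by
  intro U hU
  obtain ⟨ψ, hψ, hneg, hbd, hlim, hexp⟩ := peak_real hφ
  have hnt : Nontrivial (Cn n) := by
    by_contra h
    rw [not_nontrivial_iff_subsingleton] at h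
    exact hDunb (Set.subsingleton_of_subsingleton.finite.isBounded)
  obtain ⟨R₀, hR₀⟩ := (Bornology.IsBounded.subset_closedBall
    (Bornology.isBounded_compl_iff.2 (Bornology.isCobounded_def.2 hU)) (0 : Cn n))
  set R := max R₀ 0 with hR
  have hR0 : 0 ≤ R := le_max_right _ _
  have hUR : ∀ x, x ∉ U → ‖x‖ ≤ R := by
    intro x hx
    have := mem_closedBall_zero_iff.1 (hR₀ hx)
    exact this.trans (le_max_left _ _)
  obtain ⟨c, hc, hcb⟩ := hbd (R + 1)
  obtain ⟨R', hR'⟩ := hlim (c / 2) (by positivity)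
  set ρ := max R' 0 + R + 2 with hρ
  have hρ1 : 1 < ρ := by
    have := le_max_right R' 0
    linarith
  have hlog : 0 < Real.log ρ := Real.log_pos hρ1
  set M := 2 * (Real.log ρ + 1) / c with hM
  have hM0 : 0 < M := by positivity
  have hMc : Real.log ρ < M * c / 2 := by
    have : M * c / 2 = Real.log ρ + 1 := by rw [hM]; field_simp
    rw [this]; linarith
  refine ⟨U ∩ (closedBall 0 (R + 1))ᶜ, inter_mem hU (by
      rw [← Bornology.isCobounded_def, Bornology.isCobounded_compl_iff]
      exact isBounded_closedBall), inter_subset_left, 2 * M, by positivity, ?_⟩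
  rintro z ⟨hz, hzU, hzR⟩
  have hzR' : R + 1 < ‖z‖ := by simpa using hzR
  have hσ0 : 0 ≤ squeezing D z := Real.sSup_nonneg (fun r hr => hr.1.le)
  set e := Real.exp (2 * M * ψ z) with he
  have he0 : 0 < e := Real.exp_pos _
  refine le_trans (mul_le_mul_of_nonneg_right (hexp (2 * M) (by positivity) z hz) hσ0) ?_
  have hτ0 : 0 ≤ squeezing (D ∩ U) z := Real.sSup_nonneg (fun r hr => hr.1.le)
  rw [mul_comm, ← le_div_iff₀ he0]
  apply Real.sSup_le _ (by positivity)
  rintro r ⟨hr, f, hf, hinj, hmaps, hfz, hball⟩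
  rw [le_div_iff₀ he0]
  apply le_csSup
  · refine ⟨1, ?_⟩
    rintro s ⟨hs, f', -, -, hm', -, hb'⟩
    by_contra hcon
    push Not at hcon
    obtain ⟨x, hx⟩ := exists_norm_eq (Cn n) (zero_le_one' ℝ)
    obtain ⟨x', hx', hxx⟩ := hb' (mem_ball_zero_iff.2 (by rw [hx]; exact hcon) : x ∈ ball 0 s)
    have := mem_ball_zero_iff.1 (hm' hx')
    rw [hxx, hx] at this
    exact lt_irrefl _ this
  · refine ⟨by positivity, f, hf.mono inter_subset_left, hinj.mono inter_subset_left,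
      hmaps.mono_left inter_subset_left, hfz, ?_⟩
    intro y hy
    have hy' : ‖y‖ < r * e := mem_ball_zero_iff.1 hy
    have he1 : e ≤ 1 := by
      rw [he, Real.exp_le_one_iff]
      have := hneg z hz
      nlinarith
    obtain ⟨w, hw, hwy⟩ := hball (mem_ball_zero_iff.2 (lt_of_lt_of_le hy' (by nlinarith)) : y ∈ ball 0 r)
    by_cases hwU : w ∈ U
    · exact ⟨w, ⟨hw, hwU⟩, hwy⟩
    exfalso
    have key := embed_est hD hψ hneg hc hM0 hρ1 hcb (fun x hx hxR => hR' x hx (by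
      have := le_max_left R' 0
      linarith)) hMc hf hinj hz hzR' hfz hball hw (hUR w hwU)
    rw [hwy, ← he, mul_comm] at key
    linarith
end
end
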